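/- arXiv:2209.09523 — 8 statements merged into one kernel-verified Lean document; each statement's English description precedes it below -/
import Mathlib

section
/- Let n ≥ 2 and let T ∈ M_n(ℂ). The Banach algebra 𝒜_T is zero product determined if and only if T is diagonalizable. -/
open scoped Topology

attribute [local instance] Matrix.linftyOpNormedRing Matrix.linftyOpNormedAlgebra

/-- A (complex) Banach algebra (or more generally a topological algebra) `A` is
*zero product determined* if for every continuous bilinear functional
`φ : A × A → ℂ` satisfying `φ x y = 0` whenever `x * y = 0`, there exists a
continuous linear functional `τ` on `A` such that `φ x y = τ (x * y)` for all `x y`. -/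
def ZeroProductDetermined (A : Type*) [NonUnitalNonAssocRing A] [Module ℂ A]
    [TopologicalSpace A] : Prop :=
  ∀ φ : A →ₗ[ℂ] A →ₗ[ℂ] ℂ, Continuous (fun p : A × A => φ p.1 p.2) →
    (∀ x y : A, x * y = 0 → φ x y = 0) →
    ∃ τ : A →L[ℂ] ℂ, ∀ x y : A, φ x y = τ (x * y)

/-- `T ∈ Mₙ(ℂ)` is diagonalizable if `P⁻¹ T P` is diagonal for some invertible `P`. -/
def Diagonalizable {n : ℕ} (T : Matrix (Fin n) (Fin n) ℂ) : Prop :=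
  ∃ P : Matrix (Fin n) (Fin n) ℂ, IsUnit P ∧ (P⁻¹ * T * P).IsDiag

/-!
Both properties are equivalent to squarefreeness of the minimal polynomial of `T`.

If it is squarefree, Lagrange interpolation at its roots writes `T` as a combination of
idempotents of `𝒜_T`. A bilinear functional `φ` vanishing on zero products satisfies
`φ (x * e) y = φ x (e * y)` for idempotent `e`, hence for all `e ∈ 𝒜_T`, so that
`φ x y = φ 1 (x * y)`.

If `(X - l)²` divides it, then `T ↦ l + ε` defines a homomorphism `f + D ε` from `𝒜_T` to the
dual numbers. The functional `(x, y) ↦ f x * D y` vanishes on zero products; being of the form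
`τ (x * y)`, it would have `D y = f 1 * D y = f y * D 1 = 0`, whereas `D T = 1`.
-/

open Polynomial

section Balanced

variable {K A M : Type*} [CommRing K] [Ring A] [Algebra K A] [AddCommGroup M] [Module K M]

/-- The elements `a` over which the bilinear map `φ` is balanced: they can be moved from the right
of its first argument to the left of its second. -/
def balancedSubalgebra (φ : A →ₗ[K] A →ₗ[K] M) : Subalgebra K A where
  carrier := {a | ∀ x y, φ (x * a) y = φ x (a * y)}
  mul_mem' {a b} ha hb x y := by rw [← mul_assoc, hb, ha, mul_assoc]
  add_mem' {a b} ha hb x y := by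
    rw [mul_add, add_mul, map_add, map_add, LinearMap.add_apply, ha, hb]
  algebraMap_mem' r x y := by
    simp only [Algebra.algebraMap_eq_smul_one, mul_smul_comm, smul_mul_assoc, mul_one, one_mul,
      map_smul, LinearMap.smul_apply]

theorem mem_balancedSubalgebra_of_isIdempotentElem {φ : A →ₗ[K] A →ₗ[K] M}
    (hφ : ∀ x y, x * y = 0 → φ x y = 0) {e : A} (he : IsIdempotentElem e) :
    e ∈ balancedSubalgebra φ := fun x y ↦ by
  have h₁ : φ (x * e) (y - e * y) = 0 := hφ _ _ <| by
    rw [mul_sub, ← mul_assoc, mul_assoc x e e, he.eq, sub_self]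
  have h₂ : φ (x - x * e) (e * y) = 0 := hφ _ _ <| by
    rw [sub_mul, ← mul_assoc, ← mul_assoc, mul_assoc x e e, he.eq, sub_self]
  rw [map_sub, sub_eq_zero] at h₁
  rw [map_sub, LinearMap.sub_apply, sub_eq_zero] at h₂
  rw [h₁, h₂]

end Balanced

section SplitSeparable

variable {K A : Type*} [Field K] [Ring A] [Algebra K A]

theorem dvd_of_splits_of_separable_of_forall_isRoot {p q : K[X]} (hp : p.Splits)
    (hsep : p.Separable) (h : ∀ l ∈ p.roots, q.IsRoot l) : p ∣ q := by
  rcases eq_or_ne q 0 with rfl | hq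
  · exact dvd_zero p
  · refine hp.dvd_of_roots_le_roots hsep.ne_zero ?_
    exact (Multiset.le_iff_subset (nodup_roots hsep)).2 fun l hl ↦ (mem_roots hq).2 (h l hl)

theorem aeval_eq_aeval_of_eval_eq_on_roots_minpoly {t : A} (ht : (minpoly K t).Splits)
    (hsep : (minpoly K t).Separable) {p q : K[X]}
    (h : ∀ l ∈ (minpoly K t).roots, p.eval l = q.eval l) : aeval t p = aeval t q := by
  rw [← sub_eq_zero, ← map_sub, ← minpoly.dvd_iff]
  exact dvd_of_splits_of_separable_of_forall_isRoot ht hsep fun l hl ↦ by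
    rw [IsRoot, eval_sub, h l hl, sub_self]

theorem mem_span_isIdempotentElem_of_splits_of_separable {t : A} (ht : (minpoly K t).Splits)
    (hsep : (minpoly K t).Separable) : t ∈ Submodule.span K {e : A | IsIdempotentElem e} := by
  classical
  let s := (minpoly K t).roots.toFinset
  have id_injOn : Set.InjOn (id : K → K) s := Function.injective_id.injOn
  have eval_basis {l m : K} (hl : l ∈ s) (hm : m ∈ s) :
      (Lagrange.basis s id l).eval m = if l = m then 1 else 0 := by
    split_ifs with hlm
    · exact hlm ▸ Lagrange.eval_basis_self id_injOn hl
    · exact Lagrange.eval_basis_of_ne (v := id) hlm hm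
  have basis_idem (l : K) (hl : l ∈ s) : IsIdempotentElem (aeval t (Lagrange.basis s id l)) := by
    rw [IsIdempotentElem, ← map_mul]
    refine aeval_eq_aeval_of_eval_eq_on_roots_minpoly ht hsep fun m hm ↦ ?_
    rw [eval_mul, eval_basis hl (Multiset.mem_toFinset.2 hm), mul_ite_zero, mul_one]
    split_ifs <;> rfl
  have t_eq : t = ∑ l ∈ s, l • aeval t (Lagrange.basis s id l) := calc
    t = aeval t X := (aeval_X t).symm
    _ = aeval t (Lagrange.interpolate s id id) := by
      refine aeval_eq_aeval_of_eval_eq_on_roots_minpoly ht hsep fun l hl ↦ ?_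
      rw [eval_X]
      exact (Lagrange.eval_interpolate_at_node id id_injOn (Multiset.mem_toFinset.2 hl)).symm
    _ = ∑ l ∈ s, l • aeval t (Lagrange.basis s id l) := by
      simp only [Lagrange.interpolate_apply, id_eq, map_sum, C_mul', map_smul]
  rw [t_eq]
  exact Submodule.sum_mem _ fun l hl ↦
    Submodule.smul_mem _ l (Submodule.subset_span (basis_idem l hl))

end SplitSeparable

theorem adjoin_singleton_self_eq_top {R A : Type*} [CommSemiring R] [Semiring A] [Algebra R A]
    (a : A) : Algebra.adjoin R
      {(⟨a, Algebra.self_mem_adjoin_singleton R a⟩ : Algebra.adjoin R {a})} = ⊤ := by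
  rw [← Algebra.adjoin_adjoin_coe_preimage]
  congr 1
  ext x
  exact Subtype.ext_iff

section Minpoly

variable {K A B : Type*} [Field K]

theorem exists_algHom_apply_eq_of_aeval_minpoly_eq_zero [CommRing A] [Algebra K A] [CommRing B]
    [Algebra K B] {t : A} (ht : Algebra.adjoin K {t} = ⊤) {b : B}
    (hb : aeval b (minpoly K t) = 0) : ∃ ψ : A →ₐ[K] B, ψ t = b := by
  have aeval_surjective : Function.Surjective (aeval t : K[X] →ₐ[K] A) := by
    rwa [← AlgHom.range_eq_top, ← Algebra.adjoin_singleton_eq_range_aeval]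
  have ker_le : RingHom.ker (aeval t : K[X] →ₐ[K] A) ≤ RingHom.ker (aeval b : K[X] →ₐ[K] B) :=
    fun p hp ↦ aeval_eq_zero_of_dvd_aeval_eq_zero (minpoly.dvd K t hp) hb
  refine ⟨AlgHom.liftOfSurjective _ aeval_surjective _ ker_le, ?_⟩
  simpa only [aeval_X] using AlgHom.liftOfSurjective_apply _ aeval_surjective _ ker_le X

theorem minpoly_units_conj [Ring A] [Algebra K A] (u : Aˣ) (a : A) :
    minpoly K (↑u⁻¹ * a * ↑u) = minpoly K a := by
  simpa [ConjAct.units_smul_def] using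
    minpoly.algEquiv_eq (MulSemiringAction.toAlgEquiv K A (ConjAct.toConjAct u⁻¹)) a

theorem squarefree_minpoly_diagonal {n : Type*} [Fintype n] [DecidableEq n] (d : n → K) :
    Squarefree (minpoly K (Matrix.diagonal d)) := by
  have h : minpoly K (Matrix.diagonal d) = minpoly K d :=
    minpoly.algHom_eq (Matrix.diagonalAlgHom K) Matrix.diagonal_injective d
  rw [h]
  exact (minpoly.isRadical K d).squarefree (minpoly.ne_zero (Algebra.IsIntegral.isIntegral d))

end Minpoly

namespace ZeroProductDetermined

section Ring

variable {A : Type*} [Ring A] [Algebra ℂ A] [TopologicalSpace A]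

theorem of_adjoin_isIdempotentElem_eq_top
    (h : Algebra.adjoin ℂ {e : A | IsIdempotentElem e} = ⊤) : ZeroProductDetermined A := by
  intro φ φ_cont hφ
  have balanced : balancedSubalgebra φ = ⊤ := top_le_iff.1 <|
    h ▸ Algebra.adjoin_le fun e he ↦ mem_balancedSubalgebra_of_isIdempotentElem hφ he
  refine ⟨⟨φ 1, φ_cont.comp (Continuous.prodMk_right 1)⟩, fun x y ↦ ?_⟩
  have hx : x ∈ balancedSubalgebra φ := balanced ▸ Algebra.mem_top
  calc
    φ x y = φ (1 * x) y := by rw [one_mul]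
    _ = φ 1 (x * y) := hx 1 y

theorem of_squarefree_minpoly {t : A} (ht : Algebra.adjoin ℂ {t} = ⊤)
    (hsq : Squarefree (minpoly ℂ t)) : ZeroProductDetermined A := by
  have t_mem : t ∈ Submodule.span ℂ {e : A | IsIdempotentElem e} :=
    mem_span_isIdempotentElem_of_splits_of_separable (IsAlgClosed.splits _)
      (PerfectField.separable_iff_squarefree.2 hsq)
  refine of_adjoin_isIdempotentElem_eq_top (top_le_iff.1 ?_)
  exact ht ▸ Algebra.adjoin_singleton_le (Algebra.span_le_adjoin ℂ _ t_mem)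

theorem snd_algHom_eq_zero (hA : ZeroProductDetermined A) {ψ : A →ₐ[ℂ] DualNumber ℂ}
    (hψ : Continuous ψ) (y : A) : (ψ y).snd = 0 := by
  let f : A →ₗ[ℂ] ℂ := (TrivSqZeroExt.fstHom ℂ ℂ ℂ).toLinearMap ∘ₗ ψ.toLinearMap
  let D : A →ₗ[ℂ] ℂ := TrivSqZeroExt.sndHom ℂ ℂ ∘ₗ ψ.toLinearMap
  have f_mul (x y : A) : f (x * y) = f x * f y := by simp [f]
  have D_mul (x y : A) : D (x * y) = f x * D y + D x * f y := by simp [f, D]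
  have f_one : f 1 = 1 := by simp [f]
  have D_one : D 1 = 0 := by simp [D]
  have f_cont : Continuous f := TrivSqZeroExt.continuous_fst.comp hψ
  have D_cont : Continuous D := TrivSqZeroExt.continuous_snd.comp hψ
  obtain ⟨τ, hτ⟩ := hA ((LinearMap.mul ℂ ℂ).compl₁₂ f D)
    ((f_cont.comp continuous_fst).mul (D_cont.comp continuous_snd)) fun x y hxy ↦ by
      change f x * D y = 0
      rcases mul_eq_zero.1 (by rw [← f_mul, hxy, map_zero] : f x * f y = 0) with hx | hy
      · rw [hx, zero_mul]
      · simpa only [hxy, map_zero, hy, mul_zero, add_zero] using (D_mul x y).symm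
  replace hτ (x y : A) : f x * D y = τ (x * y) := hτ x y
  calc
    D y = f 1 * D y := by rw [f_one, one_mul]
    _ = τ (1 * y) := hτ 1 y
    _ = τ (y * 1) := by rw [one_mul, mul_one]
    _ = f y * D 1 := (hτ y 1).symm
    _ = 0 := by rw [D_one, mul_zero]

end Ring

theorem squarefree_minpoly {A : Type*} [CommRing A] [Algebra ℂ A] [TopologicalSpace A]
    [IsTopologicalAddGroup A] [ContinuousSMul ℂ A] [T2Space A] [FiniteDimensional ℂ A]
    (hA : ZeroProductDetermined A) {t : A} (ht : Algebra.adjoin ℂ {t} = ⊤) :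
    Squarefree (minpoly ℂ t) := by
  have hne : minpoly ℂ t ≠ 0 := minpoly.ne_zero (Algebra.IsIntegral.isIntegral t)
  rw [squarefree_iff_irreducible_sq_not_dvd_of_ne_zero hne]
  intro p p_irred hp
  obtain ⟨l, hl⟩ := IsAlgClosed.exists_root p (degree_pos_of_irreducible p_irred).ne'
  have dvd_minpoly : (X - C l) * (X - C l) ∣ minpoly ℂ t :=
    (mul_dvd_mul (dvd_iff_isRoot.2 hl) (dvd_iff_isRoot.2 hl)).trans hp
  let b : DualNumber ℂ := algebraMap ℂ _ l + DualNumber.eps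
  have aeval_b : aeval b (minpoly ℂ t) = 0 :=
    aeval_eq_zero_of_dvd_aeval_eq_zero dvd_minpoly (by simp [b])
  obtain ⟨ψ, hψ⟩ := exists_algHom_apply_eq_of_aeval_minpoly_eq_zero ht aeval_b
  have snd_b : b.snd = 0 :=
    hψ ▸ hA.snd_algHom_eq_zero ψ.toLinearMap.continuous_of_finiteDimensional t
  simp [b, TrivSqZeroExt.algebraMap_eq_inl] at snd_b

end ZeroProductDetermined

theorem zeroProductDetermined_iff_squarefree_minpoly {A : Type*} [CommRing A] [Algebra ℂ A]
    [TopologicalSpace A] [IsTopologicalAddGroup A] [ContinuousSMul ℂ A] [T2Space A]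
    [FiniteDimensional ℂ A] {t : A} (ht : Algebra.adjoin ℂ {t} = ⊤) :
    ZeroProductDetermined A ↔ Squarefree (minpoly ℂ t) :=
  ⟨fun hA ↦ hA.squarefree_minpoly ht, .of_squarefree_minpoly ht⟩

theorem exists_basis_apply_eq_smul_of_iSup_eigenspace_eq_top {K V ι : Type*} [Field K]
    [AddCommGroup V] [Module K V] (c : Module.Basis ι K V) {f : Module.End K V}
    (hf : ⨆ μ : K, f.eigenspace μ = ⊤) :
    ∃ (b : Module.Basis ι K V) (d : ι → K), ∀ i, f (b i) = d i • b i := by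
  let S : Set V := {v | ∃ μ : K, f v = μ • v}
  have span_eigenvectors : ⊤ ≤ Submodule.span K S := hf ▸ iSup_le fun μ v hv ↦
    Submodule.subset_span ⟨μ, Module.End.mem_eigenspace_iff.1 hv⟩
  let b₀ := Module.Basis.ofSpan span_eigenvectors
  let b := b₀.reindex (b₀.indexEquiv c)
  have b_mem (i : ι) : b i ∈ S := by
    rw [Module.Basis.reindex_apply]
    exact Module.Basis.ofSpan_subset span_eigenvectors ⟨_, rfl⟩
  choose d hd using b_mem
  exact ⟨b, d, hd⟩

namespace Diagonalizable

variable {n : ℕ} {T : Matrix (Fin n) (Fin n) ℂ}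

theorem of_basis_eigenvectors (b : Module.Basis (Fin n) ℂ (Fin n → ℂ)) {d : Fin n → ℂ}
    (hb : ∀ i, T.toLin' (b i) = d i • b i) : Diagonalizable T := by
  let std := Pi.basisFun ℂ (Fin n)
  have inv_eq : (std.toMatrix b)⁻¹ = b.toMatrix std :=
    Matrix.inv_eq_left_inv (b.toMatrix_mul_toMatrix_flip std)
  have toMatrix_std : LinearMap.toMatrix std std T.toLin' = T := by
    rw [LinearMap.toMatrix_eq_toMatrix', LinearMap.toMatrix'_toLin']
  have conj_eq : (std.toMatrix b)⁻¹ * T * std.toMatrix b = LinearMap.toMatrix b b T.toLin' := by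
    rw [inv_eq, ← basis_toMatrix_mul_linearMap_toMatrix_mul_basis_toMatrix b std b std,
      toMatrix_std]
  refine ⟨std.toMatrix b, .of_mul_eq_one _ (std.toMatrix_mul_toMatrix_flip b), ?_⟩
  intro i j hij
  rw [conj_eq, LinearMap.toMatrix_apply, hb, map_smul, b.repr_self, Finsupp.smul_apply,
    Finsupp.single_eq_of_ne hij, smul_zero]

theorem squarefree_minpoly (hT : Diagonalizable T) : Squarefree (minpoly ℂ T) := by
  obtain ⟨_, ⟨P, rfl⟩, hdiag⟩ := hT
  rw [← minpoly_units_conj P T, Matrix.coe_units_inv, ← hdiag.diagonal_diag]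
  exact squarefree_minpoly_diagonal _

theorem of_squarefree_minpoly (hsq : Squarefree (minpoly ℂ T)) : Diagonalizable T := by
  rw [← Matrix.minpoly_toLin'] at hsq
  have semisimple : Module.End.IsSemisimple T.toLin' :=
    Module.End.isSemisimple_of_squarefree_aeval_eq_zero hsq (minpoly.aeval ℂ _)
  obtain ⟨b, d, hb⟩ := exists_basis_apply_eq_smul_of_iSup_eigenspace_eq_top
    (Pi.basisFun ℂ (Fin n)) semisimple.iSup_eigenspace_eq_top
  exact .of_basis_eigenvectors b hb

end Diagonalizable

theorem diagonalizable_iff_squarefree_minpoly {n : ℕ} {T : Matrix (Fin n) (Fin n) ℂ} :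
    Diagonalizable T ↔ Squarefree (minpoly ℂ T) :=
  ⟨Diagonalizable.squarefree_minpoly, .of_squarefree_minpoly⟩

/-- For `n ≥ 2` and `T ∈ Mₙ(ℂ)`, the Banach algebra `𝒜_T` generated by `T` and the
identity is zero product determined if and only if `T` is diagonalizable. -/
theorem zpd_iff_diagonalizable (n : ℕ) (hn : 2 ≤ n) (T : Matrix (Fin n) (Fin n) ℂ) :
    ZeroProductDetermined ↥(Algebra.adjoin ℂ ({T} : Set (Matrix (Fin n) (Fin n) ℂ))) ↔
      Diagonalizable T := by
  let 𝒜 := Algebra.adjoin ℂ ({T} : Set (Matrix (Fin n) (Fin n) ℂ))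
  let t : 𝒜 := ⟨T, Algebra.self_mem_adjoin_singleton ℂ T⟩
  have minpoly_t : minpoly ℂ T = minpoly ℂ t :=
    minpoly.algHom_eq 𝒜.val Subtype.val_injective t
  have : IsTopologicalRing 𝒜 := Subring.instIsTopologicalRing 𝒜.toSubring
  rw [diagonalizable_iff_squarefree_minpoly, minpoly_t]
  exact zeroProductDetermined_iff_squarefree_minpoly (adjoin_singleton_self_eq_top T)
end

section
/- Let 𝒜 be a complex Banach algebra having a bounded approximate identity. Then the following are equivalent: (i) every continuous linear map f : 𝒜 → 𝒜* such that ab = 0 implies f(a)·b = 0 (where the module action is (f(a)·b)(c) = f(a)(bc) for c ∈ 𝒜) satisfies f(ab) = f(a)·b for all a, b ∈ 𝒜; (ii) 𝒜 is zero product determined. -/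
open scoped Topology

/-- `A` has a bounded (two-sided) approximate identity: a norm-bounded net `(eᵢ)`
with `eᵢ a → a` and `a eᵢ → a` for every `a`. -/
def HasBoundedApproxIdentity (A : Type*) [NonUnitalSeminormedRing A] : Prop :=
  ∃ C : ℝ, 0 < C ∧ ∃ (ι : Type) (l : Filter ι) (e : ι → A), l.NeBot ∧
    (∀ i, ‖e i‖ ≤ C) ∧
    ∀ a : A, Filter.Tendsto (fun i => e i * a) l (𝓝 a) ∧
      Filter.Tendsto (fun i => a * e i) l (𝓝 a)

/-!
With a right approximate identity `e`, the two conditions concern the same continuous linear maps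
`f : A → A*` and agree for each of them. The zero product hypotheses on `f` are equivalent because
`f a b = lim f a (b * e)`. As for the conclusions, let `Φ ∈ A**` be a weak-* limit point of `e`: if
`f (a * b) c = f a (b * c)` then `f x y = lim f x (y * e) = lim f (x * y) e = Φ (f (x * y))`, so
that `τ = Φ ∘ f` represents `f`.
-/

open Filter

theorem zeroProductDetermined_iff_forall_continuousLinearMap {A : Type*}
    [NonUnitalSeminormedRing A] [NormedSpace ℂ A] :
    ZeroProductDetermined A ↔
      ∀ f : A →L[ℂ] A →L[ℂ] ℂ, (∀ x y, x * y = 0 → f x y = 0) →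
        ∃ τ : A →L[ℂ] ℂ, ∀ x y, f x y = τ (x * y) := by
  constructor
  · intro h f hf
    exact h f.toLinearMap₁₂ f.continuous₂ hf
  · intro h φ hφ hzero
    let f₀ : A →ₗ[ℂ] A →L[ℂ] ℂ :=
      { toFun := fun x ↦ ⟨φ x, hφ.comp (Continuous.prodMk_right x)⟩
        map_add' := fun x y ↦ by ext; simp
        map_smul' := fun c x ↦ by ext; simp }
    exact h ⟨f₀, ContinuousLinearMap.continuous_of_continuous_uncurry f₀ hφ⟩ hzero

theorem forall_apply_mul_eq_zero_iff_of_tendsto_mul {A X : Type*} [SemigroupWithZero A]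
    [TopologicalSpace A] [Zero X] [TopologicalSpace X] [T1Space X] {l : Filter A} [l.NeBot]
    (hl : ∀ a, Tendsto (a * ·) l (𝓝 a)) {f : A → A → X} (hf : ∀ a, Continuous (f a)) :
    (∀ a b, a * b = 0 → ∀ c, f a (b * c) = 0) ↔ ∀ a b, a * b = 0 → f a b = 0 := by
  constructor
  · intro h a b hab
    have hlim : Tendsto (fun e ↦ f a (b * e)) l (𝓝 (f a b)) := ((hf a).tendsto b).comp (hl b)
    simp only [h a b hab] at hlim
    exact (tendsto_const_nhds_iff.mp hlim).symm
  · intro h a b hab c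
    exact h a (b * c) (by rw [← mul_assoc, hab, zero_mul])

section ProperScalars

variable {𝕜 : Type*} [NontriviallyNormedField 𝕜] [ProperSpace 𝕜]

theorem exists_ultrafilter_le_tendsto_bidual {E : Type*} [SeminormedAddCommGroup E]
    [NormedSpace 𝕜 E] {l : Filter E} [l.NeBot] (hl : l.IsBoundedUnder (· ≤ ·) norm) :
    ∃ (U : Ultrafilter E) (Φ : StrongDual 𝕜 (StrongDual 𝕜 E)),
      ↑U ≤ l ∧ ∀ g : StrongDual 𝕜 E, Tendsto g U (𝓝 (Φ g)) := by
  obtain ⟨C, hC⟩ := hl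
  let J : E → WeakDual 𝕜 (StrongDual 𝕜 E) := fun x ↦
    StrongDual.toWeakDual (NormedSpace.inclusionInDoubleDual 𝕜 E x)
  have hball : ∀ᶠ x in Ultrafilter.of l,
      J x ∈ WeakDual.toStrongDual ⁻¹' Metric.closedBall (0 : StrongDual 𝕜 (StrongDual 𝕜 E)) C := by
    filter_upwards [(eventually_map.mp hC).filter_mono (Ultrafilter.of_le l)] with x hx
    exact (mem_closedBall_zero_iff (E := StrongDual 𝕜 (StrongDual 𝕜 E))).mpr
      ((NormedSpace.double_dual_bound 𝕜 E x).trans hx)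
  obtain ⟨Φ, -, hΦ⟩ := (WeakDual.isCompact_closedBall 0 C).ultrafilter_le_nhds'
    ((Ultrafilter.of l).map J) hball
  exact ⟨Ultrafilter.of l, WeakDual.toStrongDual Φ, Ultrafilter.of_le l, fun g ↦
    ((WeakDual.eval_continuous g).tendsto Φ).comp hΦ⟩

theorem exists_apply_eq_mul_iff_apply_mul_eq {A : Type*} [NonUnitalSeminormedRing A]
    [NormedSpace 𝕜 A] {l : Filter A} [l.NeBot] (hl : ∀ a, Tendsto (a * ·) l (𝓝 a))
    (hbdd : l.IsBoundedUnder (· ≤ ·) norm) (f : A →L[𝕜] StrongDual 𝕜 A) :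
    (∃ τ : StrongDual 𝕜 A, ∀ x y, f x y = τ (x * y)) ↔
      ∀ a b c, f (a * b) c = f a (b * c) := by
  constructor
  · rintro ⟨τ, hτ⟩ a b c
    rw [hτ, hτ, mul_assoc]
  · intro hf
    obtain ⟨U, Φ, hU, hΦ⟩ := exists_ultrafilter_le_tendsto_bidual (𝕜 := 𝕜) hbdd
    refine ⟨Φ ∘L f, fun x y ↦ ?_⟩
    have hlim : Tendsto (fun e ↦ f x (y * e)) U (𝓝 (f x y)) :=
      ((f x).continuous.tendsto y).comp ((hl y).mono_left hU)
    simp only [← hf] at hlim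
    exact tendsto_nhds_unique hlim (hΦ (f (x * y)))

end ProperScalars

theorem leftMultiplier_criterion_iff_zpd_general {A : Type*} [NonUnitalSeminormedRing A]
    [NormedSpace ℂ A] {l : Filter A} [l.NeBot] (hl : ∀ a, Tendsto (a * ·) l (𝓝 a))
    (hbdd : l.IsBoundedUnder (· ≤ ·) norm) :
    (∀ f : A →L[ℂ] (A →L[ℂ] ℂ),
        (∀ a b : A, a * b = 0 → ∀ c : A, f a (b * c) = 0) →
        ∀ a b c : A, f (a * b) c = f a (b * c)) ↔
      ZeroProductDetermined A := by
  rw [zeroProductDetermined_iff_forall_continuousLinearMap]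
  refine forall_congr' fun f ↦ imp_congr ?_ ?_
  · exact forall_apply_mul_eq_zero_iff_of_tendsto_mul hl fun a ↦ (f a).continuous
  · exact (exists_apply_eq_mul_iff_apply_mul_eq hl hbdd f).symm

/-- Let `A` be a complex Banach algebra with a bounded approximate identity. Then the
following are equivalent: (i) every continuous linear map `f : A → A*` such that
`a * b = 0` implies `f(a)·b = 0` (where `(f(a)·b)(c) = f(a)(bc)`) is a left
multiplier, i.e. satisfies `f(ab) = f(a)·b`; (ii) `A` is zero product determined. -/
theorem leftMultiplier_criterion_iff_zpd (A : Type*) [NonUnitalNormedRing A]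
    [NormedSpace ℂ A] [IsScalarTower ℂ A A] [SMulCommClass ℂ A A] [CompleteSpace A]
    (hbai : HasBoundedApproxIdentity A) :
    (∀ f : A →L[ℂ] (A →L[ℂ] ℂ),
        (∀ a b : A, a * b = 0 → ∀ c : A, f a (b * c) = 0) →
        ∀ a b c : A, f (a * b) c = f a (b * c)) ↔
      ZeroProductDetermined A := by
  obtain ⟨C, -, ι, l, e, _, heC, he⟩ := hbai
  exact leftMultiplier_criterion_iff_zpd_general (l := l.map e) (fun a ↦ (he a).2)
    (isBoundedUnder_of ⟨C, heC⟩ : l.IsBoundedUnder (· ≤ ·) fun i ↦ ‖e i‖)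
end

section
/- Let 𝒜 be a complex Banach algebra with a bounded approximate identity which is zero product determined, and let M be a separating Banach 𝒜-bimodule. If f : 𝒜 → M is a continuous linear map such that ab = 0 implies f(a)·b = 0 for all a, b ∈ 𝒜, then f is a left multiplier, i.e. f(ab) = f(a)·b for all a, b ∈ 𝒜. -/
/-!
A zero product determined algebra forces every continuous bilinear map `Φ` that vanishes on zero
products to be balanced, `Φ (x * y) z = Φ x (y * z)`: composed with a functional `ψ`, both sides
become `τ (x * y * z)`, and such `ψ` separate points. For `Φ x y = f x · y` this reads
`f (x * y) · z = (f x · y) · z`, and `z` cancels because the right action is faithful.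
-/

open scoped Topology

/-- A Banach bimodule over a (possibly non-unital) complex Banach algebra `A`:
a Banach space `M` with bounded left and right module actions
(`l a m = a · m`, `r a m = m · a`) satisfying `(a·m)·b = a·(m·b)`. -/
structure BanachBimodule (A : Type*) (M : Type*) [NonUnitalSeminormedRing A]
    [Module ℂ A] [SeminormedAddCommGroup M] [Module ℂ M] where
  l : A →ₗ[ℂ] M →ₗ[ℂ] M
  r : A →ₗ[ℂ] M →ₗ[ℂ] M
  l_mul : ∀ a b m, l (a * b) m = l a (l b m)
  r_mul : ∀ a b m, r (a * b) m = r b (r a m)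
  l_r : ∀ a b m, l a (r b m) = r b (l a m)
  l_bdd : ∃ C : ℝ, ∀ a m, ‖l a m‖ ≤ C * ‖a‖ * ‖m‖
  r_bdd : ∃ C : ℝ, ∀ a m, ‖r a m‖ ≤ C * ‖a‖ * ‖m‖

/-- The bimodule `M` is *separating* if `A·m = {0}` implies `m = 0` and
`m·A = {0}` implies `m = 0`. -/
def BanachBimodule.Separating {A M : Type*} [NonUnitalSeminormedRing A] [Module ℂ A]
    [SeminormedAddCommGroup M] [Module ℂ M] (B : BanachBimodule A M) : Prop :=
  (∀ m : M, (∀ a : A, B.l a m = 0) → m = 0) ∧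
  (∀ m : M, (∀ a : A, B.r a m = 0) → m = 0)

section Topological

variable {A M : Type*} [NonUnitalRing A] [Module ℂ A] [TopologicalSpace A]
  [AddCommGroup M] [Module ℂ M] [TopologicalSpace M] [SeparatingDual ℂ M]

theorem ZeroProductDetermined.map_mul_left_eq_map_mul_right (hzpd : ZeroProductDetermined A)
    (Φ : A →ₗ[ℂ] A →ₗ[ℂ] M) (hΦ : Continuous fun p : A × A => Φ p.1 p.2)
    (hzero : ∀ x y : A, x * y = 0 → Φ x y = 0) (x y z : A) :
    Φ (x * y) z = Φ x (y * z) := by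
  refine (SeparatingDual.eq_iff_forall_dual_eq (R := ℂ)).mpr fun ψ => ?_
  obtain ⟨τ, hτ⟩ : ∃ τ : A →L[ℂ] ℂ, ∀ u v : A, ψ (Φ u v) = τ (u * v) :=
    hzpd (Φ.compr₂ ψ.toLinearMap) (ψ.continuous.comp hΦ)
      fun u v huv => (congrArg ψ (hzero u v huv)).trans (map_zero ψ)
  rw [hτ, hτ, mul_assoc]

theorem zpd_left_multiplier_general (hzpd : ZeroProductDetermined A)
    (r : A →ₗ[ℂ] M →ₗ[ℂ] M) (r_mul : ∀ a b m, r (a * b) m = r b (r a m))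
    (hr : Continuous fun p : A × M => r p.1 p.2)
    (r_faithful : ∀ m : M, (∀ a : A, r a m = 0) → m = 0)
    (f : A →L[ℂ] M) (hf : ∀ a b : A, a * b = 0 → r b (f a) = 0) (a b : A) :
    f (a * b) = r b (f a) := by
  have balanced (c : A) : r c (f (a * b)) = r (b * c) (f a) :=
    hzpd.map_mul_left_eq_map_mul_right (r.flip ∘ₗ f.toLinearMap)
      (hr.comp (continuous_snd.prodMk (f.continuous.comp continuous_fst))) hf a b c
  refine sub_eq_zero.mp (r_faithful _ fun c => ?_)
  rw [map_sub, balanced, r_mul, sub_self]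

end Topological

theorem BanachBimodule.continuous_r {A M : Type*} [NonUnitalSeminormedRing A] [NormedSpace ℂ A]
    [SeminormedAddCommGroup M] [NormedSpace ℂ M] (B : BanachBimodule A M) :
    Continuous fun p : A × M => B.r p.1 p.2 := by
  obtain ⟨C, hC⟩ := B.r_bdd
  exact (B.r.mkContinuous₂ C hC).continuous₂

/-- Let `A` be a zero product determined complex Banach algebra with a bounded
approximate identity and `M` a separating Banach `A`-bimodule. If `f : A → M` is a
continuous linear map such that `a * b = 0` implies `f(a)·b = 0`, then `f` is a left
multiplier: `f(ab) = f(a)·b` for all `a, b`. -/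
theorem zpd_left_multiplier (A : Type*) [NonUnitalNormedRing A] [NormedSpace ℂ A]
    [IsScalarTower ℂ A A] [SMulCommClass ℂ A A] [CompleteSpace A]
    (hzpd : ZeroProductDetermined A) (hbai : HasBoundedApproxIdentity A)
    (M : Type*) [NormedAddCommGroup M] [NormedSpace ℂ M] [CompleteSpace M]
    (B : BanachBimodule A M) (hsep : B.Separating)
    (f : A →ₗ[ℂ] M) (hf : Continuous f)
    (h : ∀ a b : A, a * b = 0 → B.r b (f a) = 0) :
    ∀ a b : A, f (a * b) = B.r b (f a) :=
  zpd_left_multiplier_general hzpd B.r B.r_mul B.continuous_r hsep.2 ⟨f, hf⟩ h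
end

section
/- Let 𝒜 and ℬ be complex Banach algebras, let φ : 𝒜 → ℬ be a bounded algebra homomorphism, and suppose 𝒜 is zero product determined and has a bounded approximate identity. Then the graph 𝒢 = {(a, φ(a)) : a ∈ 𝒜}, which is a closed subalgebra of 𝒜 × ℬ with coordinatewise operations and the norm ‖(a, φ(a))‖ = ‖a‖ + ‖φ(a)‖, is a zero product determined Banach algebra. -/
open scoped Topology

theorem ZeroProductDetermined.of_rightInverse {A B : Type*}
    [NonUnitalNonAssocRing A] [Module ℂ A] [TopologicalSpace A]
    [NonUnitalNonAssocRing B] [Module ℂ B] [TopologicalSpace B]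
    (hA : ZeroProductDetermined A) {f : A →ₙₐ[ℂ] B} {s : B →ₙₐ[ℂ] A}
    (hf : Continuous f) (hs : Continuous s) (hsf : Function.RightInverse s f) :
    ZeroProductDetermined B := by
  intro ψ hψ hψ_zero
  let fₗ : A →ₗ[ℂ] B := f
  let sL : B →L[ℂ] A := ⟨s, hs⟩
  obtain ⟨τ, hτ⟩ : ∃ τ : A →L[ℂ] ℂ, ∀ a b, ψ (f a) (f b) = τ (a * b) :=
    hA (ψ.compl₁₂ fₗ fₗ) (hψ.comp (hf.prodMap hf)) fun a b hab =>
      hψ_zero (f a) (f b) (by rw [← map_mul, hab, map_zero])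
  refine ⟨τ.comp sL, fun x y => ?_⟩
  calc
    ψ x y = ψ (f (s x)) (f (s y)) := by rw [hsf x, hsf y]
    _ = τ (s x * s y) := hτ (s x) (s y)
    _ = τ (s (x * y)) := by rw [map_mul s]

theorem graph_of_homomorphism_zpd_general {A B : Type*}
    [NonUnitalNonAssocRing A] [Module ℂ A] [TopologicalSpace A]
    [NonUnitalNonAssocRing B] [Module ℂ B] [TopologicalSpace B]
    (φ : A →ₙₐ[ℂ] B) (hφ : Continuous φ) (hA : ZeroProductDetermined A)
    (G : NonUnitalSubalgebra ℂ (A × B)) (hG : ∀ p : A × B, p ∈ G ↔ p.2 = φ p.1) :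
    ZeroProductDetermined G := by
  let toGraph : A →ₙₐ[ℂ] G :=
    NonUnitalAlgHom.codRestrict ((NonUnitalAlgHom.id ℂ A).prod φ) G fun a => (hG (a, φ a)).2 rfl
  let proj : G →ₙₐ[ℂ] A := (NonUnitalAlgHom.fst ℂ A B).comp (NonUnitalSubalgebraClass.subtype G)
  have toGraph_continuous : Continuous toGraph := (continuous_id.prodMk hφ).subtype_mk _
  have proj_continuous : Continuous proj := continuous_fst.comp continuous_subtype_val
  have proj_rightInverse : Function.RightInverse proj toGraph := fun g =>
    Subtype.ext (Prod.ext rfl ((hG g).1 g.2).symm)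
  exact hA.of_rightInverse toGraph_continuous proj_continuous proj_rightInverse

/-- Let `A`, `B` be complex Banach algebras, `φ : A → B` a bounded algebra
homomorphism, and suppose `A` is zero product determined with a bounded approximate
identity.  Then the graph `𝒢 = {(a, φ a) : a ∈ A}`, a closed subalgebra of `A × B`,
is a zero product determined Banach algebra. -/
theorem graph_of_homomorphism_zpd (A B : Type*)
    [NonUnitalNormedRing A] [NormedSpace ℂ A] [IsScalarTower ℂ A A] [SMulCommClass ℂ A A]
    [CompleteSpace A]
    [NonUnitalNormedRing B] [NormedSpace ℂ B] [IsScalarTower ℂ B B] [SMulCommClass ℂ B B]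
    [CompleteSpace B]
    (φ : A →ₙₐ[ℂ] B) (hφ : Continuous φ)
    (hzpd : ZeroProductDetermined A) (hbai : HasBoundedApproxIdentity A)
    (G : NonUnitalSubalgebra ℂ (A × B)) (hG : ∀ p : A × B, p ∈ G ↔ p.2 = φ p.1) :
    ZeroProductDetermined ↥G :=
  graph_of_homomorphism_zpd_general φ hφ hzpd G hG
end

section
/- Let 𝒜 be a complex Banach algebra which is zero product determined and has a bounded approximate identity, let M be a Banach 𝒜-bimodule, and let δ : 𝒜 → M be a bounded derivation. Then the graph 𝒢 = {(a, δ(a)) : a ∈ 𝒜}, which is a closed subalgebra of the trivial square-zero extension 𝒜 ⋉ M (the Banach algebra with underlying space 𝒜 × M, product (a,m)(b,n) = (ab, a·n + m·b), and norm ‖(a,m)‖ = ‖a‖ + ‖m‖), is a zero product determined Banach algebra. -/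
open scoped Topology

variable {A M : Type*} [NonUnitalNormedRing A] [NormedSpace ℂ A]
  [NormedAddCommGroup M] [NormedSpace ℂ M]

/-- The trivial square-zero extension `𝒜 ⋉ M`: the ring structure on `A × M` with
product `(a, m)(b, n) = (ab, a·n + m·b)`. -/
@[reducible] def trivSqZeroExtension (B : BanachBimodule A M) : NonUnitalNonAssocRing (A × M) where
  __ : AddCommGroup (A × M) := inferInstance
  mul p q := (p.1 * q.1, B.l p.1 q.2 + B.r q.1 p.2)
  left_distrib p q r := by
    show (_, _) = (_ + _, _ + _)
    refine Prod.ext (mul_add _ _ _) ?_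
    show B.l p.1 (q.2 + r.2) + B.r (q.1 + r.1) p.2 = _
    rw [map_add (B.l p.1), map_add B.r]
    show _ + (B.r q.1 + B.r r.1) p.2 = _
    rw [LinearMap.add_apply]
    show _ = (B.l p.1 q.2 + B.r q.1 p.2) + (B.l p.1 r.2 + B.r r.1 p.2)
    abel
  right_distrib p q r := by
    show (_, _) = (_ + _, _ + _)
    refine Prod.ext (add_mul _ _ _) ?_
    show B.l (p.1 + q.1) r.2 + B.r r.1 (p.2 + q.2) = _
    rw [map_add B.l, map_add (B.r r.1)]
    show (B.l p.1 + B.l q.1) r.2 + _ = _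
    rw [LinearMap.add_apply]
    show _ = (B.l p.1 r.2 + B.r r.1 p.2) + (B.l q.1 r.2 + B.r r.1 q.2)
    abel
  zero_mul p := by
    refine Prod.ext (zero_mul _) ?_
    show B.l 0 p.2 + B.r p.1 0 = 0
    rw [map_zero B.l, map_zero (B.r p.1)]
    simp
  mul_zero p := by
    refine Prod.ext (mul_zero _) ?_
    show B.l p.1 0 + B.r 0 p.2 = 0
    rw [map_zero (B.l p.1), map_zero B.r]
    simp

/-! The map `a ↦ (a, δ a)` is a linear homeomorphism of `A` onto the graph of `δ`, with inverse the
first projection; the derivation law says exactly that it is multiplicative. Being zero product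
determined only depends on the product, the linear structure and the topology, so it passes
between `A` and the graph. -/

section Transfer

variable {R S : Type*} [NonUnitalNonAssocRing R] [Module ℂ R] [TopologicalSpace R]
  [NonUnitalNonAssocRing S] [Module ℂ S] [TopologicalSpace S]

theorem ZeroProductDetermined.of_continuousLinearEquiv (hR : ZeroProductDetermined R)
    (e : R ≃L[ℂ] S) (he : ∀ x y, e (x * y) = e x * e y) : ZeroProductDetermined S := by
  intro φ φ_cont φ_zero
  have pullback_cont : Continuous fun p : R × R ↦ φ (e p.1) (e p.2) :=
    φ_cont.comp (e.continuous.prodMap e.continuous)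
  have pullback_zero (x y : R) (hxy : x * y = 0) : φ (e x) (e y) = 0 :=
    φ_zero _ _ (by rw [← he, hxy, map_zero])
  obtain ⟨τ, hτ⟩ := hR (φ.compl₁₂ e.toLinearMap e.toLinearMap) pullback_cont pullback_zero
  have symm_mul (x y : S) : e.symm (x * y) = e.symm x * e.symm y :=
    (MulEquiv.mk e.toEquiv he).symm.map_mul x y
  refine ⟨τ ∘L e.symm, fun x y ↦ ?_⟩
  calc φ x y = φ (e (e.symm x)) (e (e.symm y)) := by simp only [e.apply_symm_apply]
    _ = τ (e.symm x * e.symm y) := hτ _ _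
    _ = τ (e.symm (x * y)) := by rw [symm_mul]

theorem zeroProductDetermined_congr (e : R ≃L[ℂ] S) (he : ∀ x y, e (x * y) = e x * e y) :
    ZeroProductDetermined R ↔ ZeroProductDetermined S :=
  ⟨fun hR ↦ hR.of_continuousLinearEquiv e he,
    fun hS ↦ hS.of_continuousLinearEquiv e.symm (MulEquiv.mk e.toEquiv he).symm.map_mul⟩

end Transfer

section Graph

variable {R E F : Type*} [Semiring R] [AddCommMonoid E] [Module R E] [TopologicalSpace E]
  [AddCommMonoid F] [Module R F] [TopologicalSpace F]
  {σ : Type*} [SetLike σ (E × F)] [AddSubmonoidClass σ (E × F)] [SMulMemClass σ R (E × F)]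

/-- The linear homeomorphism `x ↦ (x, f x)` of the domain of a continuous linear map `f` onto its
graph. The graph is any linear subobject `G` of `E × F` with the right elements, rather than
`LinearMap.graph f`, so that `G` may also be a subalgebra for some product on `E × F`. -/
def graphEquiv (f : E →L[R] F) (G : σ) (mem_iff : ∀ p : E × F, p ∈ G ↔ p.2 = f p.1) :
    E ≃L[R] G where
  toFun x := ⟨(x, f x), (mem_iff _).2 rfl⟩
  invFun p := p.1.1
  map_add' x y := Subtype.ext (Prod.ext rfl (map_add f x y))
  map_smul' c x := Subtype.ext (Prod.ext rfl (map_smul f c x))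
  left_inv _ := rfl
  right_inv p := Subtype.ext (Prod.ext rfl ((mem_iff p).1 p.2).symm)
  continuous_toFun := (continuous_id.prodMk f.continuous).subtype_mk _
  continuous_invFun := continuous_fst.comp continuous_subtype_val

end Graph

theorem trivSqZeroExtension_graph_mul (B : BanachBimodule A M) {δ : A → M}
    (hδ : ∀ x y : A, δ (x * y) = B.r y (δ x) + B.l x (δ y)) (x y : A) :
    letI : NonUnitalNonAssocRing (A × M) := trivSqZeroExtension B
    ((x, δ x) * (y, δ y) : A × M) = (x * y, δ (x * y)) :=
  Prod.ext rfl (by rw [hδ, add_comm]; rfl)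

theorem graph_of_derivation_zpd_general (B : BanachBimodule A M) (δ : A →ₗ[ℂ] M)
    (hδcont : Continuous δ) (hδ : ∀ x y : A, δ (x * y) = B.r y (δ x) + B.l x (δ y)) :
    letI : NonUnitalNonAssocRing (A × M) := trivSqZeroExtension B
    ∀ G : NonUnitalSubalgebra ℂ (A × M), (∀ p : A × M, p ∈ G ↔ p.2 = δ p.1) →
      (ZeroProductDetermined ↥G ↔ ZeroProductDetermined A) := by
  intro G hG
  let : NonUnitalNonAssocRing (A × M) := trivSqZeroExtension B
  let e : A ≃L[ℂ] G := graphEquiv ⟨δ, hδcont⟩ G hG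
  have he (x y : A) : e (x * y) = e x * e y :=
    Subtype.ext (trivSqZeroExtension_graph_mul B hδ x y).symm
  exact (zeroProductDetermined_congr e he).symm

/-- Let `A` be a zero product determined complex Banach algebra with a bounded
approximate identity, `M` a Banach `A`-bimodule and `δ : A → M` a bounded derivation.
Then the graph `𝒢 = {(a, δ a) : a ∈ A}`, a closed subalgebra of the trivial
square-zero extension `𝒜 ⋉ M`, is a zero product determined Banach algebra. -/
theorem graph_of_derivation_zpd [IsScalarTower ℂ A A] [SMulCommClass ℂ A A]
    [CompleteSpace A] [CompleteSpace M]
    (hzpd : ZeroProductDetermined A) (hbai : HasBoundedApproxIdentity A)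
    (B : BanachBimodule A M) (δ : A →ₗ[ℂ] M) (hδcont : Continuous δ)
    (hδ : ∀ x y : A, δ (x * y) = B.r y (δ x) + B.l x (δ y)) :
    letI : NonUnitalNonAssocRing (A × M) := trivSqZeroExtension B
    ∀ G : NonUnitalSubalgebra ℂ (A × M), (∀ p : A × M, p ∈ G ↔ p.2 = δ p.1) →
      ZeroProductDetermined ↥G := by
  intro G hG
  exact (graph_of_derivation_zpd_general B δ hδcont hδ G hG).2 hzpd
end

section
/- Let H be a complex separable Hilbert space and let ℒ = {0, M, N, H} be a subspace lattice with two atoms on H. Then the multiplier algebra 𝓜(Alg ℒ ∩ K(H)) of the non-unital Banach algebra Alg ℒ ∩ K(H) is isomorphic as a complex algebra to Alg ℒ. -/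
open scoped Topology

/-- A *multiplier* on a complex algebra `A`: a pair `(L, R)` of linear maps with
`L(ab) = L(a)b`, `R(ab) = aR(b)` and `aL(b) = R(a)b`. -/
structure Multiplier (A : Type*) [NonUnitalNonAssocRing A] [Module ℂ A] where
  L : A →ₗ[ℂ] A
  R : A →ₗ[ℂ] A
  L_mul : ∀ a b : A, L (a * b) = L a * b
  R_mul : ∀ a b : A, R (a * b) = a * R b
  compat : ∀ a b : A, a * L b = R a * b

namespace Multiplier

variable {A : Type*} [NonUnitalRing A] [Module ℂ A] [IsScalarTower ℂ A A]
  [SMulCommClass ℂ A A]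

instance : Add (Multiplier A) :=
  ⟨fun u v =>
    ⟨u.L + v.L, u.R + v.R,
      fun a b => by simp [u.L_mul, v.L_mul, add_mul],
      fun a b => by simp [u.R_mul, v.R_mul, mul_add],
      fun a b => by simp [mul_add, add_mul, u.compat, v.compat]⟩⟩

/-- Multiplication of multipliers: `(L₁, R₁)(L₂, R₂) = (L₁ ∘ L₂, R₂ ∘ R₁)`. -/
instance : Mul (Multiplier A) :=
  ⟨fun u v =>
    ⟨u.L ∘ₗ v.L, v.R ∘ₗ u.R,
      fun a b => by simp [v.L_mul, u.L_mul],
      fun a b => by simp [u.R_mul, v.R_mul],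
      fun a b => by simp [u.compat, v.compat]⟩⟩

instance : SMul ℂ (Multiplier A) :=
  ⟨fun c u =>
    ⟨c • u.L, c • u.R,
      fun a b => by simp [u.L_mul, smul_mul_assoc],
      fun a b => by simp [u.R_mul, mul_smul_comm],
      fun a b => by
        simp only [LinearMap.smul_apply]
        rw [mul_smul_comm, u.compat, smul_mul_assoc]⟩⟩

end Multiplier

/-!
For a multiplier `(L, R)` of `A = Alg ℒ ∩ K(H)`, the implementing operator `T` is pinned down on
`D = M + N` by `b (T x) = R(b) x` for all `b ∈ A`: the kernels of the members of `A` meet in `0`,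
and if `x = a z` with `a ∈ A` then `T x = L(a) z` is a solution, because `b L(a) = R(b) a`.

By the closed graph theorem `L` is bounded, so `T` extends from the dense subspace `D` to `H` as
soon as each `x ∈ D` is some `a z` with `‖a‖ ‖z‖ ≤ K ‖x‖`. The difficulty is that `m` and `n` may be
much longer than `x = m + n`. When they are, pick `f ∈ Nᗮ` whose projection `p` to `M` is close to
`m`, and put `g = f - p ∈ Mᗮ`. The operator `m ⊗ f + n ⊗ g` of `A` sends `g / ‖g‖²` to `m + n`;
it equals `(m + n) ⊗ g + m ⊗ p`, and `‖m‖ ‖p‖` is controlled by `‖m + n‖ ‖g‖`.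
-/

open Filter InnerProductSpace

namespace Multiplier

attribute [ext] Multiplier

section Continuity

variable {A : Type*} [NonUnitalNormedRing A] [NormedSpace ℂ A] [CompleteSpace A]

lemma continuous_L (hA : ∀ c : A, (∀ b, b * c = 0) → c = 0) (u : Multiplier A) :
    Continuous u.L := by
  refine u.L.continuous_of_seq_closed_graph fun v x y hv hLv => ?_
  refine sub_eq_zero.1 (hA _ fun b => ?_)
  have hbL : Tendsto (fun k => b * u.L (v k)) atTop (𝓝 (b * u.L x)) := by
    simp only [u.compat]
    exact hv.const_mul (u.R b)
  rw [mul_sub, sub_eq_zero]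
  exact tendsto_nhds_unique (hLv.const_mul b) hbL

lemma exists_norm_L_le (hA : ∀ c : A, (∀ b, b * c = 0) → c = 0) (u : Multiplier A) :
    ∃ C, 0 ≤ C ∧ ∀ a, ‖u.L a‖ ≤ C * ‖a‖ :=
  let L : A →L[ℂ] A := ⟨u.L, u.continuous_L hA⟩
  ⟨‖L‖, norm_nonneg L, L.le_opNorm⟩

end Continuity

section Idealizer

variable {B : Type*} [Ring B] [Algebra ℂ B] {A : NonUnitalSubalgebra ℂ B}

/-- The multiplier `(a ↦ x * a, a ↦ a * x)` of `A` given by an element `x` of the ambient algebra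
that lies in the idealizer of `A`. -/
def ofIdealizer (x : B) (hl : ∀ a ∈ A, x * a ∈ A) (hr : ∀ a ∈ A, a * x ∈ A) : Multiplier A where
  L := (LinearMap.mulLeft ℂ x).restrict (p := A.toSubmodule) (q := A.toSubmodule) hl
  R := (LinearMap.mulRight ℂ x).restrict (p := A.toSubmodule) (q := A.toSubmodule) hr
  L_mul a b := Subtype.ext (mul_assoc x a b).symm
  R_mul a b := Subtype.ext (mul_assoc (a : B) b x)
  compat a b := Subtype.ext (mul_assoc (a : B) x b).symm

theorem exists_equiv_of_forall_exists_eq_mul (S : Subalgebra ℂ B)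
    (hl : ∀ x ∈ S, ∀ a ∈ A, x * a ∈ A) (hr : ∀ x ∈ S, ∀ a ∈ A, a * x ∈ A)
    (hinj : ∀ x ∈ S, (∀ a ∈ A, x * a = 0) → x = 0)
    (hsurj : ∀ u : Multiplier A, ∃ x ∈ S, ∀ a : A, (u.L a : B) = x * a ∧ (u.R a : B) = a * x) :
    ∃ e : S ≃ Multiplier A,
      (∀ x y : S, e (x + y) = e x + e y) ∧
      (∀ x y : S, e (x * y) = e x * e y) ∧
      (∀ (c : ℂ) (x : S), e (c • x) = c • e x) := by
  let φ : S → Multiplier A := fun x => ofIdealizer x.1 (hl x x.2) (hr x x.2)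
  have hφ : Function.Bijective φ := by
    refine ⟨fun x y hxy => ?_, fun u => ?_⟩
    · refine sub_eq_zero.1 (Subtype.ext (hinj _ (x - y).2 fun a ha => ?_))
      have hL : (x : B) * a = y * a := congrArg (fun u : Multiplier A => (u.L ⟨a, ha⟩ : B)) hxy
      rw [Subalgebra.coe_sub, sub_mul, hL, sub_self]
    · obtain ⟨x, hx, hu⟩ := hsurj u
      refine ⟨⟨x, hx⟩, ?_⟩
      ext a
      exacts [(hu a).1.symm, (hu a).2.symm]
  refine ⟨.ofBijective φ hφ, fun x y => ?_, fun x y => ?_, fun c x => ?_⟩ <;> ext a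
  exacts [add_mul (x : B) y a, mul_add (a : B) x y, mul_assoc (x : B) y a,
    (mul_assoc (a : B) x y).symm, smul_mul_assoc c (x : B) a, mul_smul_comm c (a : B) x]

end Idealizer

section Operators

variable {E : Type*} [NormedAddCommGroup E] [NormedSpace ℂ E]
  {A : NonUnitalSubalgebra ℂ (E →L[ℂ] E)}

lemma apply_L_apply (u : Multiplier A) (a b : A) (z : E) :
    (b : E →L[ℂ] E) ((u.L a : E →L[ℂ] E) z) = (u.R b : E →L[ℂ] E) ((a : E →L[ℂ] E) z) :=
  DFunLike.congr_fun (congrArg Subtype.val (u.compat b a)) z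

lemma eq_L_apply (hA : ∀ y : E, (∀ b ∈ A, b y = 0) → y = 0) {u : Multiplier A} {a : A} {y z : E}
    (hy : ∀ b : A, (b : E →L[ℂ] E) y = (u.R b : E →L[ℂ] E) ((a : E →L[ℂ] E) z)) :
    y = (u.L a : E →L[ℂ] E) z := by
  refine sub_eq_zero.1 (hA _ fun b hb => ?_)
  rw [map_sub, u.apply_L_apply a ⟨b, hb⟩, ← hy, sub_self]

lemma L_eq_mul_of_R_eq_mul (hA : ∀ y : E, (∀ b ∈ A, b y = 0) → y = 0) {u : Multiplier A}
    {T : E →L[ℂ] E} (hT : ∀ b : A, (u.R b : E →L[ℂ] E) = b * T) (a : A) :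
    (u.L a : E →L[ℂ] E) = T * a := by
  ext z
  exact (eq_L_apply hA fun b => (DFunLike.congr_fun (hT b) _).symm).symm

lemma exists_linearMap_apply_eq_R_apply (hA : ∀ y : E, (∀ b ∈ A, b y = 0) → y = 0)
    {D : Submodule ℂ E} (hD : ∀ x ∈ D, ∃ a ∈ A, ∃ z, a z = x) (u : Multiplier A) :
    ∃ T : D →ₗ[ℂ] E, ∀ (b : A) (x : D),
      (b : E →L[ℂ] E) (T x) = (u.R b : E →L[ℂ] E) x := by
  have hexists : ∀ x : D, ∃ y : E, ∀ b : A,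
      (b : E →L[ℂ] E) y = (u.R b : E →L[ℂ] E) x := by
    intro x
    obtain ⟨a, ha, z, hz⟩ := hD x x.2
    refine ⟨(u.L ⟨a, ha⟩ : E →L[ℂ] E) z, fun b => ?_⟩
    rw [apply_L_apply, hz]
  choose T hT using hexists
  refine ⟨⟨⟨T, fun x y => ?_⟩, fun c x => ?_⟩, fun b x => hT x b⟩ <;>
    refine sub_eq_zero.1 (hA _ fun b hb => ?_) <;>
    simp [hT _ ⟨b, hb⟩]

theorem exists_eq_mul [CompleteSpace E] (hAc : IsClosed (A : Set (E →L[ℂ] E)))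
    (hA : ∀ y : E, (∀ b ∈ A, b y = 0) → y = 0)
    {D : Submodule ℂ E} (hDd : Dense (D : Set E)) {K : ℝ}
    (hD : ∀ x ∈ D, ∃ a ∈ A, ∃ z, a z = x ∧ ‖a‖ * ‖z‖ ≤ K * ‖x‖) (u : Multiplier A) :
    ∃ T : E →L[ℂ] E, ∀ a : A,
      (u.L a : E →L[ℂ] E) = T * a ∧ (u.R a : E →L[ℂ] E) = a * T := by
  have : CompleteSpace A := hAc.completeSpace_coe
  have hAfaithful : ∀ c : A, (∀ b : A, b * c = 0) → c = 0 := fun c hc => by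
    ext x
    exact hA _ fun b hb => DFunLike.congr_fun (congrArg Subtype.val (hc ⟨b, hb⟩)) x
  obtain ⟨C, hC, hL⟩ := u.exists_norm_L_le hAfaithful
  obtain ⟨T₀, hT₀⟩ := exists_linearMap_apply_eq_R_apply hA
    (fun x hx => (hD x hx).imp fun a h => ⟨h.1, h.2.imp fun z h => h.1⟩) u
  have hbound : ∀ x : D, ‖T₀ x‖ ≤ C * K * ‖D.subtype x‖ := by
    intro x
    obtain ⟨a, ha, z, hz, haz⟩ := hD x x.2
    have hTx : T₀ x = (u.L ⟨a, ha⟩ : E →L[ℂ] E) z := eq_L_apply hA fun b => by rw [hT₀, hz]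
    calc ‖T₀ x‖ = ‖(u.L ⟨a, ha⟩ : E →L[ℂ] E) z‖ := by rw [hTx]
      _ ≤ ‖u.L ⟨a, ha⟩‖ * ‖z‖ := ContinuousLinearMap.le_opNorm _ z
      _ ≤ C * ‖a‖ * ‖z‖ := by gcongr; exact hL ⟨a, ha⟩
      _ = C * (‖a‖ * ‖z‖) := mul_assoc _ _ _
      _ ≤ C * (K * ‖D.subtype x‖) := mul_le_mul_of_nonneg_left haz hC
      _ = C * K * ‖D.subtype x‖ := (mul_assoc _ _ _).symm
  have hrange : DenseRange D.subtype := hDd.denseRange_val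
  let T : E →L[ℂ] E := T₀.extendOfNorm D.subtype
  have hT : ∀ x : D, T x = T₀ x := LinearMap.extendOfNorm_eq hrange ⟨_, hbound⟩
  have hR : ∀ b : A, (u.R b : E →L[ℂ] E) = b * T := fun b =>
    DFunLike.coe_injective <| Continuous.ext_on hDd (u.R b).1.continuous (b.1 * T).continuous
      fun x hx => by simp [hT ⟨x, hx⟩, hT₀]
  exact ⟨T, fun a => ⟨L_eq_mul_of_R_eq_mul hA hR a, hR a⟩⟩

end Operators

end Multiplier

section LatticeAlg

variable {𝕜 E : Type*} [NontriviallyNormedField 𝕜] [NormedAddCommGroup E] [NormedSpace 𝕜 E]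

/-- `Alg ℒ`, the algebra of bounded operators leaving every member of `ℒ` invariant. The trivial
members `0` and `E` of a subspace lattice impose no condition, so `ℒ` is allowed to omit them. -/
def latticeAlg (ℒ : Set (Submodule 𝕜 E)) : Subalgebra 𝕜 (E →L[𝕜] E) where
  carrier := {T | ∀ P ∈ ℒ, ∀ x ∈ P, T x ∈ P}
  mul_mem' hT hU P hP x hx := hT P hP _ (hU P hP x hx)
  add_mem' hT hU P hP x hx := P.add_mem (hT P hP x hx) (hU P hP x hx)
  algebraMap_mem' c P _ _ hx := P.smul_mem c hx

/-- `Alg ℒ ∩ K(E)`, the compact operators in `Alg ℒ`. -/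
def compactLatticeAlg (ℒ : Set (Submodule 𝕜 E)) : NonUnitalSubalgebra 𝕜 (E →L[𝕜] E) where
  carrier := {T | T ∈ latticeAlg ℒ ∧ IsCompactOperator T}
  mul_mem' hT hU := ⟨mul_mem hT.1 hU.1, hT.2.comp_clm _⟩
  add_mem' hT hU := ⟨add_mem hT.1 hU.1, hT.2.add hU.2⟩
  zero_mem' := ⟨zero_mem _, isCompactOperator_zero⟩
  smul_mem' c _ hT := ⟨Subalgebra.smul_mem _ hT.1 c, hT.2.smul c⟩

variable {ℒ : Set (Submodule 𝕜 E)}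

lemma mem_latticeAlg {T : E →L[𝕜] E} : T ∈ latticeAlg ℒ ↔ ∀ P ∈ ℒ, ∀ x ∈ P, T x ∈ P :=
  Iff.rfl

lemma mem_compactLatticeAlg {T : E →L[𝕜] E} :
    T ∈ compactLatticeAlg ℒ ↔ T ∈ latticeAlg ℒ ∧ IsCompactOperator T :=
  Iff.rfl

lemma mul_mem_compactLatticeAlg_left {T a : E →L[𝕜] E} (hT : T ∈ latticeAlg ℒ)
    (ha : a ∈ compactLatticeAlg ℒ) : T * a ∈ compactLatticeAlg ℒ :=
  ⟨mul_mem hT ha.1, ha.2.clm_comp T⟩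

lemma mul_mem_compactLatticeAlg_right {T a : E →L[𝕜] E} (hT : T ∈ latticeAlg ℒ)
    (ha : a ∈ compactLatticeAlg ℒ) : a * T ∈ compactLatticeAlg ℒ :=
  ⟨mul_mem ha.1 hT, ha.2.comp_clm T⟩

lemma isClosed_latticeAlg (hℒ : ∀ P ∈ ℒ, IsClosed (P : Set E)) :
    IsClosed (latticeAlg ℒ : Set (E →L[𝕜] E)) := by
  have hinter : (latticeAlg ℒ : Set (E →L[𝕜] E)) = ⋂ P ∈ ℒ, ⋂ x ∈ P, (fun T => T x) ⁻¹' P := by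
    ext T
    simp [mem_latticeAlg]
  rw [hinter]
  exact isClosed_biInter fun P hP => isClosed_biInter fun x _ =>
    (hℒ P hP).preimage (continuous_eval_const x)

lemma isClosed_compactLatticeAlg [CompleteSpace E] (hℒ : ∀ P ∈ ℒ, IsClosed (P : Set E)) :
    IsClosed (compactLatticeAlg ℒ : Set (E →L[𝕜] E)) :=
  (isClosed_latticeAlg hℒ).inter isClosed_setOfPred_isCompactOperator

end LatticeAlg

section TwoSubspaces

variable {𝕜 H : Type*} [RCLike 𝕜] [NormedAddCommGroup H] [InnerProductSpace 𝕜 H]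
  {M N : Submodule 𝕜 H}

lemma isCompactOperator_rankOne (x y : H) : IsCompactOperator (rankOne 𝕜 x y) :=
  ((isCompactOperator_id (E := 𝕜)).comp_clm (innerSL 𝕜 y)).clm_comp
    (ContinuousLinearMap.toSpanSingleton 𝕜 x)

lemma rankOne_mem_compactLatticeAlg {m f : H} (hm : m ∈ M) (hf : f ∈ Nᗮ) :
    rankOne 𝕜 m f ∈ compactLatticeAlg {M, N} := by
  refine ⟨?_, isCompactOperator_rankOne m f⟩
  rintro P (rfl | rfl) x hx
  · exact P.smul_mem _ hm
  · simp [Submodule.inner_left_of_mem_orthogonal hx hf]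

lemma exists_mem_orthogonal_inner_eq_one [N.HasOrthogonalProjection] {x : H} (hx : x ∉ N) :
    ∃ f ∈ Nᗮ, inner 𝕜 f x = 1 := by
  rw [← N.orthogonal_orthogonal, Submodule.mem_orthogonal] at hx
  push Not at hx
  obtain ⟨f, hf, hfx⟩ := hx
  exact ⟨(starRingEnd 𝕜 (inner 𝕜 f x))⁻¹ • f, Nᗮ.smul_mem _ hf, by simp [inner_smul_left, hfx]⟩

lemma exists_mem_orthogonal_inner_smul_eq_self [N.HasOrthogonalProjection] (hMN : Disjoint M N) :
    ∃ f ∈ Nᗮ, ∃ y ∈ M, ∀ m ∈ M, (inner 𝕜 f y : 𝕜) • m = m := by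
  rcases eq_or_ne M ⊥ with rfl | hM
  · exact ⟨0, zero_mem _, 0, zero_mem _, by simp⟩
  · obtain ⟨y, hy, hy0⟩ := M.ne_bot_iff.1 hM
    obtain ⟨f, hf, hfy⟩ := exists_mem_orthogonal_inner_eq_one
      fun hyN => hy0 (Submodule.disjoint_def.1 hMN y hy hyN)
    exact ⟨f, hf, y, hy, fun m _ => by rw [hfy, one_smul]⟩

lemma exists_mem_compactLatticeAlg_apply_eq_self [N.HasOrthogonalProjection]
    (hMN : Disjoint M N) :
    ∃ y ∈ M, ∀ m ∈ M, ∃ a ∈ compactLatticeAlg {M, N}, a y = m := by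
  obtain ⟨f, hf, y, hy, hfy⟩ := exists_mem_orthogonal_inner_smul_eq_self hMN
  exact ⟨y, hy, fun m hm => ⟨rankOne 𝕜 m f, rankOne_mem_compactLatticeAlg hm hf, hfy m hm⟩⟩

lemma mem_of_forall_compactLatticeAlg_apply_eq_zero [N.HasOrthogonalProjection]
    (hd : Dense ((M ⊔ N : Submodule 𝕜 H) : Set H)) {y : H}
    (hy : ∀ b ∈ compactLatticeAlg {M, N}, b y = 0) : y ∈ N := by
  rw [← N.orthogonal_orthogonal, Submodule.mem_orthogonal]
  intro f hf
  rcases eq_or_ne M ⊥ with rfl | hM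
  · rw [bot_sup_eq] at hd
    rw [hd.eq_zero_of_mem_orthogonal hf, inner_zero_left]
  · obtain ⟨m, hm, hm0⟩ := M.ne_bot_iff.1 hM
    simpa [hm0] using hy _ (rankOne_mem_compactLatticeAlg hm hf)

lemma eq_zero_of_forall_compactLatticeAlg_apply_eq_zero [M.HasOrthogonalProjection]
    [N.HasOrthogonalProjection] (hMN : Disjoint M N)
    (hd : Dense ((M ⊔ N : Submodule 𝕜 H) : Set H)) {y : H}
    (hy : ∀ b ∈ compactLatticeAlg {M, N}, b y = 0) : y = 0 :=
  Submodule.disjoint_def.1 hMN y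
    (mem_of_forall_compactLatticeAlg_apply_eq_zero (sup_comm M N ▸ hd) (Set.pair_comm M N ▸ hy))
    (mem_of_forall_compactLatticeAlg_apply_eq_zero hd hy)

lemma le_topologicalClosure_map_starProjection_orthogonal [CompleteSpace H]
    [M.HasOrthogonalProjection] [N.HasOrthogonalProjection] (hMN : Disjoint M N) :
    M ≤ (Nᗮ.map (M.starProjection : H →ₗ[𝕜] H)).topologicalClosure := by
  intro m hm
  rw [← Submodule.orthogonal_orthogonal_eq_closure, Submodule.mem_orthogonal]
  intro v hv
  have hvN : M.starProjection v ∈ N := by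
    rw [← N.orthogonal_orthogonal, Submodule.mem_orthogonal']
    intro f hf
    rw [Submodule.inner_starProjection_left_eq_right]
    exact Submodule.inner_left_of_mem_orthogonal (Submodule.mem_map_of_mem hf) hv
  have hv0 : M.starProjection v = 0 :=
    Submodule.disjoint_def.1 hMN _ (M.starProjection_apply_mem v) hvN
  rw [← Submodule.starProjection_eq_self_iff.2 hm,
    ← Submodule.inner_starProjection_left_eq_right, hv0, inner_zero_left]

lemma exists_mem_orthogonal_norm_starProjection_sub_lt [CompleteSpace H]
    [M.HasOrthogonalProjection] [N.HasOrthogonalProjection] (hMN : Disjoint M N) {m : H}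
    (hm : m ∈ M) {ε : ℝ} (hε : 0 < ε) : ∃ f ∈ Nᗮ, ‖M.starProjection f - m‖ < ε := by
  obtain ⟨_, ⟨f, hf, rfl⟩, hdist⟩ := Metric.mem_closure_iff.1
    (le_topologicalClosure_map_starProjection_orthogonal hMN hm) ε hε
  exact ⟨f, hf, by rwa [dist_comm, dist_eq_norm] at hdist⟩

/-- The estimate is possible because `⟪f, m + n⟫ = ⟪P f, m⟫`: when `P f` is close to `m` and `m + n`
is small, `f` must be long compared with its projection `P f`. -/
lemma exists_mem_orthogonal_norm_starProjection_le [CompleteSpace H]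
    [M.HasOrthogonalProjection] [N.HasOrthogonalProjection] (hMN : Disjoint M N) {m n : H}
    (hm : m ∈ M) (hn : n ∈ N) (hmn : 6 * ‖m + n‖ < ‖m‖) :
    ∃ f ∈ Nᗮ, f - M.starProjection f ≠ 0 ∧
      ‖m‖ * ‖M.starProjection f‖ ≤ 6 * ‖m + n‖ * ‖f - M.starProjection f‖ := by
  have hm0 : 0 < ‖m‖ := (by positivity : 0 ≤ 6 * ‖m + n‖).trans_lt hmn
  obtain ⟨f, hf, hfm⟩ := exists_mem_orthogonal_norm_starProjection_sub_lt hMN hm (half_pos hm0)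
  set p := M.starProjection f
  have hp : ‖p‖ ≤ 3 / 2 * ‖m‖ := by linarith [norm_le_norm_add_norm_sub' p m]
  have hinner : inner 𝕜 f (m + n) = inner 𝕜 p m := by
    rw [inner_add_right, Submodule.inner_left_of_mem_orthogonal hn hf, add_zero,
      Submodule.inner_starProjection_left_eq_right, Submodule.starProjection_eq_self_iff.2 hm]
  have hlower : ‖m‖ ^ 2 / 2 ≤ ‖f‖ * ‖m + n‖ := by
    have hself : ‖m‖ ^ 2 ≤ ‖(inner 𝕜 p m : 𝕜)‖ + ‖p - m‖ * ‖m‖ := by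
      have hsplit : (inner 𝕜 m m : 𝕜) = inner 𝕜 p m - inner 𝕜 (p - m) m := by
        rw [inner_sub_left, sub_sub_cancel]
      calc ‖m‖ ^ 2 = ‖(inner 𝕜 m m : 𝕜)‖ := by simp [inner_self_eq_norm_sq_to_K]
        _ ≤ ‖(inner 𝕜 p m : 𝕜)‖ + ‖(inner 𝕜 (p - m) m : 𝕜)‖ := hsplit ▸ norm_sub_le _ _
        _ ≤ ‖(inner 𝕜 p m : 𝕜)‖ + ‖p - m‖ * ‖m‖ := by gcongr; exact norm_inner_le_norm _ _
    have hinner_le : ‖(inner 𝕜 p m : 𝕜)‖ ≤ ‖f‖ * ‖m + n‖ := hinner ▸ norm_inner_le_norm _ _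
    nlinarith
  have hpf : ‖m‖ * ‖p‖ ≤ 3 * ‖m + n‖ * ‖f‖ := by nlinarith
  have hphalf : ‖p‖ ≤ ‖f‖ / 2 := by
    refine le_of_mul_le_mul_left ?_ hm0
    nlinarith [norm_nonneg f]
  have hfp : ‖f‖ ≤ 2 * ‖f - p‖ := by linarith [norm_sub_norm_le f p]
  have hf0 : 0 < ‖f‖ := pos_of_mul_pos_left (b := ‖m + n‖) (by nlinarith) (norm_nonneg _)
  refine ⟨f, hf, norm_pos_iff.1 (by linarith), ?_⟩
  nlinarith [norm_nonneg (m + n)]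

lemma exists_mem_inner_eq_one_norm_mul_norm_eq_one {g : H} (hg : g ∈ M) (hg0 : g ≠ 0) :
    ∃ z ∈ M, (inner 𝕜 g z : 𝕜) = 1 ∧ ‖g‖ * ‖z‖ = 1 := by
  have hnorm : ‖g‖ ≠ 0 := norm_ne_zero_iff.2 hg0
  refine ⟨((‖g‖ ^ 2)⁻¹ : 𝕜) • g, M.smul_mem _ hg, ?_, ?_⟩
  · rw [inner_smul_right, inner_self_eq_norm_sq_to_K]
    exact inv_mul_cancel₀ (by simpa using hg0)
  · rw [norm_smul, norm_inv, norm_pow, RCLike.norm_ofReal, abs_norm]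
    field_simp

lemma exists_apply_eq_add_of_norm_lt [CompleteSpace H]
    [M.HasOrthogonalProjection] [N.HasOrthogonalProjection] (hMN : Disjoint M N) {m n : H}
    (hm : m ∈ M) (hn : n ∈ N) (hmn : 6 * ‖m + n‖ < ‖m‖) :
    ∃ a ∈ compactLatticeAlg {M, N}, ∃ z : H, a z = m + n ∧ ‖a‖ * ‖z‖ ≤ 7 * ‖m + n‖ := by
  obtain ⟨f, hf, hg0, hle⟩ := exists_mem_orthogonal_norm_starProjection_le hMN hm hn hmn
  set p := M.starProjection f
  set g := f - p
  have hfg : f = g + p := (sub_add_cancel f p).symm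
  have hg : g ∈ Mᗮ := M.sub_starProjection_mem_orthogonal f
  obtain ⟨z, hz, hgz, hgz_norm⟩ := exists_mem_inner_eq_one_norm_mul_norm_eq_one hg hg0
  have hfz : (inner 𝕜 f z : 𝕜) = 1 := by
    rw [hfg, inner_add_left, hgz,
      Submodule.inner_right_of_mem_orthogonal (M.starProjection_apply_mem f) hz, add_zero]
  have hsum : rankOne 𝕜 m f + rankOne 𝕜 n g = rankOne 𝕜 (m + n) g + rankOne 𝕜 m p := by
    rw [hfg]
    simp only [map_add, add_apply]
    abel
  refine ⟨rankOne 𝕜 m f + rankOne 𝕜 n g, add_mem (rankOne_mem_compactLatticeAlg hm hf)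
    (Set.pair_comm M N ▸ rankOne_mem_compactLatticeAlg hn hg), z, by simp [hfz, hgz], ?_⟩
  calc ‖rankOne 𝕜 m f + rankOne 𝕜 n g‖ * ‖z‖
      ≤ (‖m + n‖ * ‖g‖ + ‖m‖ * ‖p‖) * ‖z‖ := by
        rw [hsum]
        gcongr
        exact (norm_add_le _ _).trans_eq (by simp only [norm_rankOne])
    _ ≤ (7 * ‖m + n‖ * ‖g‖) * ‖z‖ := by
        gcongr
        linarith
    _ = 7 * ‖m + n‖ := by rw [mul_assoc, hgz_norm, mul_one]

lemma exists_apply_eq_add_of_norm_le [M.HasOrthogonalProjection] [N.HasOrthogonalProjection]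
    (hMN : Disjoint M N) :
    ∃ K : ℝ, ∀ m ∈ M, ∀ n ∈ N, ‖m‖ ≤ 6 * ‖m + n‖ →
      ∃ a ∈ compactLatticeAlg {M, N}, ∃ z : H, a z = m + n ∧ ‖a‖ * ‖z‖ ≤ K * ‖m + n‖ := by
  obtain ⟨f, hf, y, hy, hfy⟩ := exists_mem_orthogonal_inner_smul_eq_self hMN
  obtain ⟨g, hg, z, hz, hgz⟩ := exists_mem_orthogonal_inner_smul_eq_self hMN.symm
  refine ⟨7 * (‖f‖ + ‖g‖) * ‖y + z‖, fun m hm n hn hmn => ?_⟩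
  refine ⟨rankOne 𝕜 m f + rankOne 𝕜 n g, add_mem (rankOne_mem_compactLatticeAlg hm hf)
    (Set.pair_comm M N ▸ rankOne_mem_compactLatticeAlg hn hg), y + z, ?_, ?_⟩
  · simp [inner_add_right, Submodule.inner_left_of_mem_orthogonal hz hf,
      Submodule.inner_left_of_mem_orthogonal hy hg, hfy m hm, hgz n hn]
  · have hn' : ‖n‖ ≤ 7 * ‖m + n‖ := by
      linarith [add_sub_cancel_left m n ▸ norm_sub_le (m + n) m]
    calc ‖rankOne 𝕜 m f + rankOne 𝕜 n g‖ * ‖y + z‖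
        ≤ (‖m‖ * ‖f‖ + ‖n‖ * ‖g‖) * ‖y + z‖ := by
          gcongr
          exact (norm_add_le _ _).trans_eq (by simp only [norm_rankOne])
      _ ≤ (7 * ‖m + n‖ * ‖f‖ + 7 * ‖m + n‖ * ‖g‖) * ‖y + z‖ := by
          gcongr
          linarith [norm_nonneg (m + n)]
      _ = 7 * (‖f‖ + ‖g‖) * ‖y + z‖ * ‖m + n‖ := by ring

theorem exists_apply_eq_of_mem_sup [CompleteSpace H] [M.HasOrthogonalProjection]
    [N.HasOrthogonalProjection] (hMN : Disjoint M N) :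
    ∃ K : ℝ, ∀ x ∈ M ⊔ N,
      ∃ a ∈ compactLatticeAlg {M, N}, ∃ z : H, a z = x ∧ ‖a‖ * ‖z‖ ≤ K * ‖x‖ := by
  obtain ⟨K, hK⟩ := exists_apply_eq_add_of_norm_le hMN
  refine ⟨max K 7, fun x hx => ?_⟩
  obtain ⟨m, hm, n, hn, rfl⟩ := Submodule.mem_sup.1 hx
  rcases le_or_gt ‖m‖ (6 * ‖m + n‖) with hmn | hmn
  · obtain ⟨a, ha, z, haz, hle⟩ := hK m hm n hn hmn
    exact ⟨a, ha, z, haz, hle.trans (by gcongr; exact le_max_left K 7)⟩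
  · obtain ⟨a, ha, z, haz, hle⟩ := exists_apply_eq_add_of_norm_lt hMN hm hn hmn
    exact ⟨a, ha, z, haz, hle.trans (by gcongr; exact le_max_right K 7)⟩

lemma mem_latticeAlg_of_forall_mul_mem [M.HasOrthogonalProjection] [N.HasOrthogonalProjection]
    (hMN : Disjoint M N) {T : H →L[𝕜] H}
    (hT : ∀ a ∈ compactLatticeAlg {M, N}, T * a ∈ compactLatticeAlg {M, N}) :
    T ∈ latticeAlg {M, N} := by
  rintro P (rfl | rfl) x hx
  · obtain ⟨y, hy, hmap⟩ := exists_mem_compactLatticeAlg_apply_eq_self hMN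
    obtain ⟨a, ha, rfl⟩ := hmap x hx
    exact (hT a ha).1 P (by simp) y hy
  · obtain ⟨y, hy, hmap⟩ := exists_mem_compactLatticeAlg_apply_eq_self hMN.symm
    obtain ⟨a, ha, rfl⟩ := hmap x hx
    exact (hT a (Set.pair_comm P M ▸ ha)).1 P (by simp) y hy

lemma eq_zero_of_forall_mul_compactLatticeAlg_eq_zero [CompleteSpace H]
    [M.HasOrthogonalProjection] [N.HasOrthogonalProjection] (hMN : Disjoint M N)
    (hd : Dense ((M ⊔ N : Submodule 𝕜 H) : Set H)) {T : H →L[𝕜] H}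
    (hT : ∀ a ∈ compactLatticeAlg {M, N}, T * a = 0) : T = 0 := by
  refine DFunLike.coe_injective (T.continuous.ext_on hd continuous_const fun x hx => ?_)
  obtain ⟨K, hK⟩ := exists_apply_eq_of_mem_sup hMN
  obtain ⟨a, ha, z, rfl, -⟩ := hK x hx
  exact DFunLike.congr_fun (hT a ha) z

end TwoSubspaces

lemma Multiplier.exists_mem_latticeAlg_eq_mul {H : Type*} [NormedAddCommGroup H]
    [InnerProductSpace ℂ H] [CompleteSpace H] {M N : Submodule ℂ H} (hMc : IsClosed (M : Set H))
    (hNc : IsClosed (N : Set H)) (hMN : Disjoint M N)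
    (hd : Dense ((M ⊔ N : Submodule ℂ H) : Set H)) (u : Multiplier (compactLatticeAlg {M, N})) :
    ∃ T ∈ latticeAlg {M, N}, ∀ a : compactLatticeAlg {M, N},
      (u.L a : H →L[ℂ] H) = T * a ∧ (u.R a : H →L[ℂ] H) = a * T := by
  have : CompleteSpace M := hMc.completeSpace_coe
  have : CompleteSpace N := hNc.completeSpace_coe
  obtain ⟨K, hK⟩ := exists_apply_eq_of_mem_sup hMN
  obtain ⟨T, hT⟩ := u.exists_eq_mul
    (isClosed_compactLatticeAlg (by rintro P (rfl | rfl) <;> assumption))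
    (fun y => eq_zero_of_forall_compactLatticeAlg_apply_eq_zero hMN hd) hd hK
  refine ⟨T, mem_latticeAlg_of_forall_mul_mem hMN fun a ha => ?_, hT⟩
  rw [← (hT ⟨a, ha⟩).1]
  exact (u.L ⟨a, ha⟩).2

theorem multiplier_algebra_iso_two_atoms_general (H : Type*)
    [NormedAddCommGroup H] [InnerProductSpace ℂ H] [CompleteSpace H]
    (M N : Submodule ℂ H) (hMc : IsClosed (M : Set H)) (hNc : IsClosed (N : Set H))
    (hMN : M ⊓ N = ⊥) (hspan : (M ⊔ N).topologicalClosure = ⊤)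
    (S : Subalgebra ℂ (H →L[ℂ] H))
    (hS : ∀ T : H →L[ℂ] H, T ∈ S ↔ (∀ x ∈ M, T x ∈ M) ∧ (∀ x ∈ N, T x ∈ N))
    (A0 : NonUnitalSubalgebra ℂ (H →L[ℂ] H))
    (hA0 : ∀ T : H →L[ℂ] H, T ∈ A0 ↔ T ∈ S ∧ IsCompactOperator ⇑T) :
    ∃ e : ↥S ≃ Multiplier ↥A0,
      (∀ x y : ↥S, e (x + y) = e x + e y) ∧
      (∀ x y : ↥S, e (x * y) = e x * e y) ∧
      (∀ (c : ℂ) (x : ↥S), e (c • x) = c • e x) := by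
  obtain rfl : S = latticeAlg {M, N} := by ext T; simp [hS, mem_latticeAlg]
  obtain rfl : A0 = compactLatticeAlg {M, N} := by ext T; simp [hA0, mem_compactLatticeAlg]
  have : CompleteSpace M := hMc.completeSpace_coe
  have : CompleteSpace N := hNc.completeSpace_coe
  have hdisj : Disjoint M N := disjoint_iff.2 hMN
  have hd : Dense ((M ⊔ N : Submodule ℂ H) : Set H) :=
    Submodule.dense_iff_topologicalClosure_eq_top.2 hspan
  exact Multiplier.exists_equiv_of_forall_exists_eq_mul _
    (fun _ hT _ ha => mul_mem_compactLatticeAlg_left hT ha)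
    (fun _ hT _ ha => mul_mem_compactLatticeAlg_right hT ha)
    (fun _ _ hT => eq_zero_of_forall_mul_compactLatticeAlg_eq_zero hdisj hd hT)
    (Multiplier.exists_mem_latticeAlg_eq_mul hMc hNc hdisj hd)

set_option synthInstance.maxHeartbeats 1000000 in
/-- Let `H` be a complex separable Hilbert space and `ℒ = {0, M, N, H}` a subspace
lattice with two atoms on `H`.  Then the multiplier algebra `𝓜(Alg ℒ ∩ K(H))` of the
non-unital Banach algebra `Alg ℒ ∩ K(H)` is isomorphic as a complex algebra to
`Alg ℒ`.  Here `S` realizes `Alg ℒ` and `A0` realizes `Alg ℒ ∩ K(H)`. -/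
theorem multiplier_algebra_iso_two_atoms (H : Type*)
    [NormedAddCommGroup H] [InnerProductSpace ℂ H] [CompleteSpace H]
    [TopologicalSpace.SeparableSpace H]
    (M N : Submodule ℂ H) (hMc : IsClosed (M : Set H)) (hNc : IsClosed (N : Set H))
    (hMN : M ⊓ N = ⊥) (hspan : (M ⊔ N).topologicalClosure = ⊤)
    (S : Subalgebra ℂ (H →L[ℂ] H))
    (hS : ∀ T : H →L[ℂ] H, T ∈ S ↔ (∀ x ∈ M, T x ∈ M) ∧ (∀ x ∈ N, T x ∈ N))
    (A0 : NonUnitalSubalgebra ℂ (H →L[ℂ] H))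
    (hA0 : ∀ T : H →L[ℂ] H, T ∈ A0 ↔ T ∈ S ∧ IsCompactOperator ⇑T) :
    ∃ e : ↥S ≃ Multiplier ↥A0,
      (∀ x y : ↥S, e (x + y) = e x + e y) ∧
      (∀ x y : ↥S, e (x * y) = e x * e y) ∧
      (∀ (c : ℂ) (x : ↥S), e (c • x) = c • e x) :=
  multiplier_algebra_iso_two_atoms_general H M N hMc hNc hMN hspan S hS A0 hA0
end

section
/- Let 𝒜 be a countable-dimensional locally matrix algebra over ℂ having a nonzero idempotent e. Then 𝒜 is a zero Lie product determined algebra: for every bilinear functional φ : 𝒜 × 𝒜 → ℂ with φ(x,y) = 0 whenever xy = yx, there exists a linear functional τ on 𝒜 such that φ(x,y) = τ(xy − yx) for all x, y ∈ 𝒜. -/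
/-- An algebra `A` is *zero Lie product determined* (algebraic version) if for every
bilinear functional `φ` on `A` vanishing on commuting pairs there exists a linear
functional `τ` on `A` with `φ x y = τ (xy − yx)` for all `x, y`. -/
def ZeroLieProductDetermined (A : Type*) [NonUnitalNonAssocRing A] [Module ℂ A] : Prop :=
  ∀ φ : A →ₗ[ℂ] A →ₗ[ℂ] ℂ,
    (∀ x y : A, x * y = y * x → φ x y = 0) →
    ∃ τ : A →ₗ[ℂ] ℂ, ∀ x y : A, φ x y = τ (x * y - y * x)

/-- `A` is a *locally matrix algebra* over `ℂ`: every finite subset of `A` is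
contained in a subalgebra isomorphic (as a complex algebra) to a full matrix algebra
`M_k(ℂ)`. -/
def IsLocallyMatrixAlgebra (A : Type*) [NonUnitalRing A] [Module ℂ A]
    [SMulCommClass ℂ A A] [IsScalarTower ℂ A A] : Prop :=
  ∀ s : Finset A, ∃ (B : NonUnitalSubalgebra ℂ A) (k : ℕ), 0 < k ∧
    (↑s : Set A) ⊆ (B : Set A) ∧
    ∃ f : ↥B ≃ Matrix (Fin k) (Fin k) ℂ,
      (∀ x y : ↥B, f (x + y) = f x + f y) ∧
      (∀ x y : ↥B, f (x * y) = f x * f y) ∧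
      (∀ (c : ℂ) (x : ↥B), f (c • x) = c • f x)

/-!
For matrices, commuting combinations of matrix units force a bilinear `φ` vanishing on commuting
pairs to agree on matrix units with `τ (x * y - y * x)`, where `τ (E i l) = φ (E i z) (E z l)` for
any fixed index `z`.

A bilinear `φ` with values in an injective module (over a field: in any vector space) has the form
`τ (x * y - y * x)` if and only if `∑ φ xᵢ yᵢ = 0` for every finite family with
`∑ (xᵢ * yᵢ - yᵢ * xᵢ) = 0`. Such a family lies in a matrix subalgebra, so a `τ` on each matrix
subalgebra suffices, and no compatibility between these functionals is required.
-/

open Matrix TensorProduct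

/-- The `M`-valued version, over a commutative ring `R`, of the zero Lie product determined
property: every `M`-valued bilinear map on `A` vanishing on commuting pairs is a linear function of
the commutator. The commutator is written out because `A` need not be associative. -/
def ZeroLieProductDeterminedInto (R A M : Type*) [CommRing R] [NonUnitalNonAssocRing A]
    [Module R A] [AddCommGroup M] [Module R M] : Prop :=
  ∀ φ : A →ₗ[R] A →ₗ[R] M, (∀ x y : A, Commute x y → φ x y = 0) →
    ∃ τ : A →ₗ[R] M, ∀ x y : A, φ x y = τ (x * y - y * x)

/-- The commutator `x * y - y * x` as a bilinear map, through which the bilinear maps in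
`ZeroLieProductDeterminedInto` are to be factored. -/
def commutatorBilin (R A : Type*) [CommRing R] [NonUnitalNonAssocRing A] [Module R A]
    [SMulCommClass R A A] [IsScalarTower R A A] : A →ₗ[R] A →ₗ[R] A :=
  LinearMap.mul R A - (LinearMap.mul R A).flip

@[simp]
lemma commutatorBilin_apply {R A : Type*} [CommRing R] [NonUnitalNonAssocRing A] [Module R A]
    [SMulCommClass R A A] [IsScalarTower R A A] (x y : A) :
    commutatorBilin R A x y = x * y - y * x :=
  rfl

section MatrixAlgebra

variable {n : Type*} [Fintype n] [DecidableEq n]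

lemma commute_single_single_of_ne {R : Type*} [Semiring R] {i j k l : n} (hjk : j ≠ k)
    (hil : i ≠ l) (a b : R) :
    Commute (single i j a) (single k l b) := by
  simp [commute_iff_eq, hjk, hil.symm]

lemma commute_single_add_single_sub {R : Type*} [Ring R] {i j k l : n} (hil : i ≠ l) :
    Commute (single i j 1 + single i k 1) (single j l 1 - single k l (1 : R)) := by
  by_cases hjk : j = k
  · simp [hjk]
  · simp [commute_iff_eq, add_mul, mul_add, sub_mul, mul_sub, hil.symm, hjk, Ne.symm hjk]

-- A cyclic permutation matrix commutes with its square.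
lemma commute_single_cycle {R : Type*} [Semiring R] {i j k : n} (hij : i ≠ j) (hik : i ≠ k)
    (hjk : j ≠ k) :
    Commute (single i j 1 + single j k 1 + single k i 1)
      (single i k 1 + single j i 1 + single k j (1 : R)) := by
  have hsq : single i k 1 + single j i 1 + single k j (1 : R) =
      (single i j 1 + single j k 1 + single k i 1) ^ 2 := by
    simp only [sq, add_mul, mul_add, single_mul_single_same, mul_one, ne_eq, not_false_eq_true,
      single_mul_single_of_ne, hij, hik, hjk, hij.symm, hik.symm, hjk.symm]
    abel
  rw [hsq]
  exact (Commute.refl _).pow_right 2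

variable {R M : Type*} [CommRing R] [AddCommGroup M] [Module R M]
  {φ : Matrix n n R →ₗ[R] Matrix n n R →ₗ[R] M}

lemma map_single_single_eq_of_ne (hφ : ∀ x y, Commute x y → φ x y = 0) {i l : n} (hil : i ≠ l)
    (j k : n) :
    φ (single i j 1) (single j l 1) = φ (single i k 1) (single k l 1) := by
  by_cases hjk : j = k
  · rw [hjk]
  have h := hφ _ _ (commute_single_add_single_sub (j := j) (k := k) hil)
  simp only [map_add, map_sub, LinearMap.add_apply,
    hφ _ _ (commute_single_single_of_ne hjk hil 1 1),
    hφ _ _ (commute_single_single_of_ne (Ne.symm hjk) hil 1 1)] at h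
  rw [← sub_eq_zero, ← h]
  abel

lemma map_single_single_swap (hφ : ∀ x y, Commute x y → φ x y = 0) (i j k : n) :
    φ (single i j 1) (single j i 1) =
      φ (single i k 1) (single k i 1) - φ (single j k 1) (single k j 1) := by
  have halt : φ.IsAlt := fun x ↦ hφ x x (Commute.refl x)
  rcases eq_or_ne i j with rfl | hij
  · rw [halt, sub_self]
  rcases eq_or_ne i k with rfl | hik
  · rw [halt, zero_sub, halt.neg]
  rcases eq_or_ne j k with rfl | hjk
  · rw [halt, sub_zero]
  have h := hφ _ _ (commute_single_cycle hij hik hjk)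
  simp only [map_add, LinearMap.add_apply,
    hφ _ _ (commute_single_single_of_ne hij.symm hik 1 1),
    hφ _ _ (commute_single_single_of_ne hjk hij 1 1),
    hφ _ _ (commute_single_single_of_ne hik.symm hjk 1 1),
    hφ _ _ (commute_single_single_of_ne hjk.symm hij.symm 1 1),
    hφ _ _ (commute_single_single_of_ne hij hik.symm 1 1),
    hφ _ _ (commute_single_single_of_ne hik hjk.symm 1 1)] at h
  rw [← sub_eq_zero, ← h, ← halt.neg (single i k 1)]
  abel

lemma map_single_single_eq_commutator (hφ : ∀ x y, Commute x y → φ x y = 0)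
    {τ : Matrix n n R →ₗ[R] M} {z : n}
    (hτ : ∀ i l, τ (single i l 1) = φ (single i z 1) (single z l 1)) (i j k l : n) :
    φ (single i j 1) (single k l 1) =
      τ (single i j 1 * single k l 1 - single k l 1 * single i j 1) := by
  have halt : φ.IsAlt := fun x ↦ hφ x x (Commute.refl x)
  rcases eq_or_ne j k with rfl | hjk <;> rcases eq_or_ne i l with rfl | hil
  · simp only [single_mul_single_same, mul_one, map_sub, hτ]
    exact map_single_single_swap hφ i j z
  · simp only [single_mul_single_same, mul_one, ne_eq, hil.symm, not_false_eq_true,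
      single_mul_single_of_ne, sub_zero, hτ]
    exact map_single_single_eq_of_ne hφ hil j z
  · simp only [single_mul_single_same, mul_one, ne_eq, hjk, not_false_eq_true,
      single_mul_single_of_ne, zero_sub, map_neg, hτ]
    rw [← halt.neg, map_single_single_eq_of_ne hφ hjk.symm i z]
  · rw [(commute_single_single_of_ne hjk hil 1 1).eq, sub_self, map_zero]
    exact hφ _ _ (commute_single_single_of_ne hjk hil 1 1)

end MatrixAlgebra

theorem zeroLieProductDeterminedInto_matrix (R M n : Type*) [CommRing R] [AddCommGroup M]
    [Module R M] [Fintype n] : ZeroLieProductDeterminedInto R (Matrix n n R) M := by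
  classical
  intro φ hφ
  rcases isEmpty_or_nonempty n with _ | ⟨⟨z⟩⟩
  · exact ⟨0, fun x y ↦ hφ x y (Subsingleton.elim _ _)⟩
  let τ : Matrix n n R →ₗ[R] M := (stdBasis R n n).constr R fun p ↦
    φ (single p.1 z 1) (single z p.2 1)
  have hτ (i l : n) : τ (single i l 1) = φ (single i z 1) (single z l 1) := by
    rw [← stdBasis_eq_single, Module.Basis.constr_basis]
  have hfactor : φ = (commutatorBilin R (Matrix n n R)).compr₂ τ := by
    refine LinearMap.ext_basis (stdBasis R n n) (stdBasis R n n) ?_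
    rintro ⟨i, j⟩ ⟨k, l⟩
    simp only [stdBasis_eq_single, LinearMap.compr₂_apply, commutatorBilin_apply]
    exact map_single_single_eq_commutator hφ hτ i j k l
  exact ⟨τ, fun x y ↦ by rw [hfactor, LinearMap.compr₂_apply, commutatorBilin_apply]⟩

lemma exists_finset_mem_range_mapIncl_span {R M : Type*} [CommSemiring R] [AddCommMonoid M]
    [Module R M] (t : M ⊗[R] M) :
    ∃ s : Finset M, t ∈ LinearMap.range
      (mapIncl (Submodule.span R (s : Set M)) (Submodule.span R (s : Set M))) := by
  classical
  obtain ⟨P, Q, hP, hQ, ht⟩ := exists_finite_submodule_of_setFinite {t} (Set.finite_singleton t)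
  obtain ⟨s₁, rfl⟩ := Module.Finite.iff_fg.mp hP
  obtain ⟨s₂, rfl⟩ := Module.Finite.iff_fg.mp hQ
  refine ⟨s₁ ∪ s₂, range_mapIncl_mono ?_ ?_ (ht rfl)⟩ <;>
    exact Submodule.span_mono (by simp)

lemma exists_comp_eq_of_ker_le_ker {R U V W : Type*} [Ring R] [AddCommGroup U] [Module R U]
    [AddCommGroup V] [Module R V] [AddCommGroup W] [Module R W] (hW : Module.Baer R W)
    {f : U →ₗ[R] V} {g : U →ₗ[R] W} (h : LinearMap.ker f ≤ LinearMap.ker g) :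
    ∃ τ : V →ₗ[R] W, τ ∘ₗ f = g := by
  have hinj : Function.Injective ((LinearMap.ker f).liftQ f le_rfl) :=
    LinearMap.ker_eq_bot.mp (Submodule.ker_liftQ_eq_bot _ _ _ le_rfl)
  obtain ⟨τ, hτ⟩ := hW.extension_property _ hinj ((LinearMap.ker f).liftQ g h)
  exact ⟨τ, LinearMap.ext fun x ↦ LinearMap.congr_fun hτ (Submodule.Quotient.mk x)⟩

section LocalToGlobal

variable {R A M : Type*} [CommRing R] [AddCommGroup M] [Module R M]

lemma ZeroLieProductDeterminedInto.lift_map_eq_zero {B : Type*} [NonUnitalNonAssocRing A]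
    [Module R A] [SMulCommClass R A A] [IsScalarTower R A A] [NonUnitalNonAssocRing B] [Module R B]
    [SMulCommClass R B B] [IsScalarTower R B B] (hB : ZeroLieProductDeterminedInto R B M)
    {φ : A →ₗ[R] A →ₗ[R] M} (hφ : ∀ x y, Commute x y → φ x y = 0)
    {f : B →ₙₐ[R] A} (hf : Function.Injective f) {t : B ⊗[R] B}
    (ht : lift (commutatorBilin R A) (map (f : B →ₗ[R] A) (f : B →ₗ[R] A) t) = 0) :
    lift φ (map (f : B →ₗ[R] A) (f : B →ₗ[R] A) t) = 0 := by
  obtain ⟨τ, hτ⟩ := hB (φ.compl₁₂ (f : B →ₗ[R] A) (f : B →ₗ[R] A)) fun x y hxy ↦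
    hφ _ _ (hxy.map f)
  have hφ_factor : lift φ ∘ₗ map (f : B →ₗ[R] A) (f : B →ₗ[R] A) =
      τ ∘ₗ lift (commutatorBilin R B) := ext' hτ
  have hcomm : lift (commutatorBilin R A) ∘ₗ map (f : B →ₗ[R] A) (f : B →ₗ[R] A) =
      (f : B →ₗ[R] A) ∘ₗ lift (commutatorBilin R B) := ext' fun x y ↦ by simp
  have ht_B : lift (commutatorBilin R B) t = 0 := hf <| by
    rw [map_zero, ← ht]
    exact (LinearMap.congr_fun hcomm t).symm
  calc lift φ (map (f : B →ₗ[R] A) (f : B →ₗ[R] A) t)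
      = τ (lift (commutatorBilin R B) t) := LinearMap.congr_fun hφ_factor t
    _ = 0 := by rw [ht_B, map_zero]

theorem zeroLieProductDeterminedInto_of_forall_finset [NonUnitalNonAssocRing A] [Module R A]
    [SMulCommClass R A A] [IsScalarTower R A A] (hM : Module.Baer R M) {ι : Type*} {B : ι → Type*}
    [∀ i, NonUnitalNonAssocRing (B i)] [∀ i, Module R (B i)] [∀ i, SMulCommClass R (B i) (B i)]
    [∀ i, IsScalarTower R (B i) (B i)] (hB : ∀ i, ZeroLieProductDeterminedInto R (B i) M)
    (f : ∀ i, B i →ₙₐ[R] A) (hf : ∀ i, Function.Injective (f i))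
    (hcover : ∀ s : Finset A, ∃ i, (s : Set A) ⊆ Set.range (f i)) :
    ZeroLieProductDeterminedInto R A M := by
  intro φ hφ
  have hker : LinearMap.ker (lift (commutatorBilin R A)) ≤ LinearMap.ker (lift φ) := by
    intro t ht
    obtain ⟨s, hs⟩ := exists_finset_mem_range_mapIncl_span t
    obtain ⟨i, hi⟩ := hcover s
    have hspan : Submodule.span R (s : Set A) ≤ LinearMap.range (f i : B i →ₗ[R] A) :=
      Submodule.span_le.mpr hi
    obtain ⟨t, rfl⟩ := range_map_mono (by simpa) (by simpa) hs
    exact (hB i).lift_map_eq_zero hφ (hf i) ht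
  obtain ⟨τ, hτ⟩ := exists_comp_eq_of_ker_le_ker hM hker
  exact ⟨τ, fun x y ↦ (LinearMap.congr_fun hτ (x ⊗ₜ y)).symm⟩

theorem locallyMatrixAlgebra_zero_lie_product_determined_general [NonUnitalNonAssocRing A]
    [Module R A] [SMulCommClass R A A] [IsScalarTower R A A] (hM : Module.Baer R M)
    (hloc : ∀ s : Finset A, ∃ (n : ℕ) (f : Matrix (Fin n) (Fin n) R →ₙₐ[R] A),
      Function.Injective f ∧ (s : Set A) ⊆ Set.range f) :
    ZeroLieProductDeterminedInto R A M := by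
  choose n f hf hs using hloc
  exact zeroLieProductDeterminedInto_of_forall_finset hM
    (fun s ↦ zeroLieProductDeterminedInto_matrix R M (Fin (n s))) f hf fun s ↦ ⟨s, hs s⟩

end LocalToGlobal

lemma IsLocallyMatrixAlgebra.exists_nonUnitalAlgHom {A : Type*} [NonUnitalRing A] [Module ℂ A]
    [SMulCommClass ℂ A A] [IsScalarTower ℂ A A] (hA : IsLocallyMatrixAlgebra A) (s : Finset A) :
    ∃ (n : ℕ) (f : Matrix (Fin n) (Fin n) ℂ →ₙₐ[ℂ] A),
      Function.Injective f ∧ (s : Set A) ⊆ Set.range f := by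
  obtain ⟨B, n, -, hsB, f, hadd, hmul, hsmul⟩ := hA s
  let F : B →ₙₐ[ℂ] Matrix (Fin n) (Fin n) ℂ :=
    { toFun := f
      map_smul' := hsmul
      map_zero' := by simpa using hsmul 0 0
      map_add' := hadd
      map_mul' := hmul }
  let G : Matrix (Fin n) (Fin n) ℂ →ₙₐ[ℂ] B := F.inverse f.symm f.left_inv f.right_inv
  refine ⟨n, (NonUnitalSubalgebraClass.subtype B).comp G,
    Subtype.val_injective.comp f.symm.injective, fun a ha ↦ ⟨f ⟨a, hsB ha⟩, ?_⟩⟩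
  exact congrArg Subtype.val (f.symm_apply_apply ⟨a, hsB ha⟩)

/-- A countable-dimensional locally matrix algebra over `ℂ` having a nonzero
idempotent is zero Lie product determined. -/
theorem locallyMatrixAlgebra_zero_lie_product_determined (A : Type*) [NonUnitalRing A]
    [Module ℂ A] [SMulCommClass ℂ A A] [IsScalarTower ℂ A A]
    (hdim : Module.rank ℂ A ≤ Cardinal.aleph0)
    (hloc : IsLocallyMatrixAlgebra A)
    (e : A) (he : e * e = e) (hne : e ≠ 0) :
    ZeroLieProductDetermined A := by
  exact locallyMatrixAlgebra_zero_lie_product_determined_general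
    (.of_injective (Module.injective_of_isSemisimpleRing ℂ ℂ)) hloc.exists_nonUnitalAlgHom
end

section
/- Let H be a complex Hilbert space and let K and W be closed subspaces of H with K ∩ W = {0} and closed linear span K ∨ W = H. Let F(K) be the linear span of the rank-one operators x⊗f : y ↦ f(y)x with 0 ≠ x ∈ K and 0 ≠ f ∈ W^⊥ (continuous linear functionals on H vanishing on W). Then F(K) is a (non-unital) subalgebra of B(H) and is a zero Lie product determined algebra: for every bilinear functional φ : F(K) × F(K) → ℂ with φ(x,y) = 0 whenever xy = yx, there exists a linear functional τ on F(K) such that φ(x,y) = τ(xy − yx) for all x, y ∈ F(K). -/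
/-!
Fix a pairing `p` of spaces `V` and `E` and an algebra spanned by a copy of `V ⊗ E`, its pure
tensors `T f x` multiplying by `T f x * T g y = p f y • T g x`. If `p = 0`, all products vanish.
Otherwise choose `h`, `u` with `p h u = 1`. A bilinear form which vanishes wherever `p` does is a
multiple of `p`. If `p g x = 0`, this applies to `(f, y) ↦ φ (T f x) (T g y)`, because `T f x` and
`T g y` commute as soon as `p f y = 0` too; hence
`φ (T f x) (T g y) - p f y * φ (T h x) (T g u)` vanishes whenever `p g x = 0`, and applying the same
principle in the variables `(g, x)` determines it for all `g` and `x`. The resulting formula says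
that `φ` is the commutator followed by the functional `T g x ↦ φ (T h x) (T g u)`. This functional
is well defined for the algebra of rank-one operators because `f ⊗ x ↦ f.smulRight x` is injective
on the tensor product.
-/

open scoped TensorProduct

section Pairing

variable {R V E : Type*} [CommRing R] [AddCommGroup V] [Module R V] [AddCommGroup E] [Module R E]

lemma bilinear_eq_smul_of_vanishing {p β : V →ₗ[R] E →ₗ[R] R} {h : V} {u : E} (hu : p h u = 1)
    (hβ : ∀ f y, p f y = 0 → β f y = 0) : β = β h u • p := by
  have on_h (y : E) : β h y = p h y * β h u := by
    have := hβ h (y - p h y • u) (by simp [hu])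
    simpa [sub_eq_zero] using this
  have on_u (f : V) : β f u = p f u * β h u := by
    have := hβ (f - p f u • h) u (by simp [hu])
    simpa [sub_eq_zero] using this
  ext f y
  -- The coefficients `s`, `t` solve `p (f - s • h) (y - t • u) = 0` without any division.
  let s := p f u + 1
  let t := p h y + p f u * p h y - p f y
  have hp : p (f - s • h) (y - t • u) = 0 := by
    simp only [s, t, map_sub, map_smul, LinearMap.sub_apply, LinearMap.smul_apply, smul_eq_mul, hu]
    ring
  have hβ' := hβ _ _ hp
  simp only [map_sub, map_smul, LinearMap.sub_apply, LinearMap.smul_apply, smul_eq_mul, hu]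
    at hp hβ' ⊢
  linear_combination hβ' + t * on_u f + s * on_h y - β h u * hp

variable {A : Type*} [NonUnitalNonAssocRing A] [Module R A]
  {p : V →ₗ[R] E →ₗ[R] R} {T : V →ₗ[R] E →ₗ[R] A}

lemma apply_rankOne_eq_of_vanishing_on_commuting (hT : ∀ f x g y, T f x * T g y = p f y • T g x)
    {φ : A →ₗ[R] A →ₗ[R] R} (hφ : ∀ a b, a * b = b * a → φ a b = 0)
    {h : V} {u : E} (hu : p h u = 1) (f : V) (x : E) (g : V) (y : E) :
    φ (T f x) (T g y) = p f y * φ (T h x) (T g u) - p g x * φ (T h y) (T f u) := by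
  have alt : φ.IsAlt := fun a ↦ hφ a a rfl
  have null (f x g y) (hfy : p f y = 0) (hgx : p g x = 0) : φ (T f x) (T g y) = 0 :=
    hφ _ _ (by simp [hT, hfy, hgx])
  have of_null (g x) (hgx : p g x = 0) : φ (T f x) (T g y) = p f y * φ (T h x) (T g u) := by
    let β : V →ₗ[R] E →ₗ[R] R := φ.compl₁₂ (T.flip x) (T g)
    have hβ : β = β h u • p := bilinear_eq_smul_of_vanishing hu fun f y hfy ↦ null f x g y hfy hgx
    simpa [β, mul_comm] using LinearMap.congr_fun₂ hβ f y
  let δ : V →ₗ[R] E →ₗ[R] R :=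
    (φ.compl₁₂ (T f) (T.flip y) - p f y • φ.compl₁₂ (T h) (T.flip u)).flip
  have hδ : δ = δ h u • p :=
    bilinear_eq_smul_of_vanishing hu fun g x hgx ↦ by simp [δ, of_null g x hgx]
  have defect := LinearMap.congr_fun₂ hδ g x
  simp only [δ, LinearMap.flip_apply, LinearMap.sub_apply, LinearMap.smul_apply,
    LinearMap.compl₁₂_apply, smul_eq_mul, alt (T h u)] at defect
  linear_combination defect - p g x * alt.neg (T f u) (T h y)

variable [IsScalarTower R A A] [SMulCommClass R A A]

lemma exists_eq_apply_commutator (e : V ⊗[R] E ≃ₗ[R] A)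
    (he : ∀ f x g y, e (f ⊗ₜ x) * e (g ⊗ₜ y) = p f y • e (g ⊗ₜ x))
    {φ : A →ₗ[R] A →ₗ[R] R} (hφ : ∀ a b, a * b = b * a → φ a b = 0)
    {h : V} {u : E} (hu : p h u = 1) :
    ∃ τ : A →ₗ[R] R, ∀ a b, φ a b = τ (a * b - b * a) := by
  let T : V →ₗ[R] E →ₗ[R] A := TensorProduct.curry e.toLinearMap
  let τ : A →ₗ[R] R := TensorProduct.lift (φ.compl₁₂ (T h) (T.flip u)).flip ∘ₗ e.symm.toLinearMap
  have hτ (g : V) (x : E) : τ (e (g ⊗ₜ x)) = φ (T h x) (T g u) := by simp [τ]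
  let commutator : A →ₗ[R] A →ₗ[R] A := LinearMap.mul R A - (LinearMap.mul R A).flip
  have on_tensors : φ.compl₁₂ e.toLinearMap e.toLinearMap =
      (commutator.compr₂ τ).compl₁₂ e.toLinearMap e.toLinearMap := by
    ext f x g y
    simpa [commutator, he, hτ, T] using
      apply_rankOne_eq_of_vanishing_on_commuting (T := T) he hφ hu f x g y
  refine ⟨τ, fun a b ↦ ?_⟩
  simpa [commutator] using LinearMap.congr_fun₂ on_tensors (e.symm a) (e.symm b)

end Pairing

namespace ZeroLieProductDetermined

variable {A : Type*} [NonUnitalNonAssocRing A] [Module ℂ A]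

lemma of_mul_comm (hA : ∀ a b : A, a * b = b * a) : ZeroLieProductDetermined A :=
  fun _ hφ ↦ ⟨0, fun a b ↦ hφ a b (hA a b)⟩

lemma of_tensorProduct_equiv [IsScalarTower ℂ A A] [SMulCommClass ℂ A A] {V E : Type*}
    [AddCommGroup V] [Module ℂ V] [AddCommGroup E] [Module ℂ E] (p : V →ₗ[ℂ] E →ₗ[ℂ] ℂ)
    (e : V ⊗[ℂ] E ≃ₗ[ℂ] A)
    (he : ∀ f x g y, e (f ⊗ₜ x) * e (g ⊗ₜ y) = p f y • e (g ⊗ₜ x)) :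
    ZeroLieProductDetermined A := by
  by_cases hp : p = 0
  · have mul_eq_zero : (LinearMap.mul ℂ A).compl₁₂ e.toLinearMap e.toLinearMap = 0 := by
      ext f x g y
      simp [he, hp]
    have mul_zero (a b : A) : a * b = 0 := by
      simpa using LinearMap.congr_fun₂ mul_eq_zero (e.symm a) (e.symm b)
    exact of_mul_comm fun a b ↦ by rw [mul_zero, mul_zero]
  · obtain ⟨f, u, hfu⟩ : ∃ f u, p f u ≠ 0 := by
      by_contra! hp_apply
      exact hp (LinearMap.ext₂ hp_apply)
    have hu : p ((p f u)⁻¹ • f) u = 1 := by simp [hfu]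
    exact fun _ hφ ↦ exists_eq_apply_commutator e he hφ hu

end ZeroLieProductDetermined

lemma dualTensorHom_injective_of_free (R M N : Type*) [CommSemiring R] [AddCommMonoid M]
    [Module R M] [AddCommMonoid N] [Module R N] [Module.Free R N] :
    Function.Injective (dualTensorHom R M N) := by
  classical
  let b := Module.Free.chooseBasis R N
  have coeff (t : Module.Dual R M ⊗[R] N) (i) (m : M) :
      TensorProduct.equivFinsuppOfBasisRight b t i m = b.repr (dualTensorHom R M N t m) i := by
    induction t with
    | zero => simp
    | tmul f x => simp [mul_comm]
    | add s t hs ht => simp [hs, ht]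
  intro s t hst
  apply (TensorProduct.equivFinsuppOfBasisRight b).injective
  ext i m
  rw [coeff, coeff, hst]

section RankOne

variable {𝕜 H : Type*} [Field 𝕜] [TopologicalSpace 𝕜] [IsTopologicalRing 𝕜]
  [AddCommGroup H] [Module 𝕜 H] [TopologicalSpace H] [IsTopologicalAddGroup H]
  [ContinuousSMul 𝕜 H] (K : Submodule 𝕜 H) (V : Submodule 𝕜 (H →L[𝕜] 𝕜))

/-- The linear map `V ⊗ K → B(H)` sending `f ⊗ x` to the rank-one operator `y ↦ f y • x`. The
functional is the left factor, as in `dualTensorHom`. -/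
noncomputable def rankOneMap : V ⊗[𝕜] K →ₗ[𝕜] H →L[𝕜] H :=
  TensorProduct.lift <| LinearMap.mk₂ 𝕜 (fun f x ↦ (f : H →L[𝕜] 𝕜).smulRight (x : H))
    (fun _ _ _ ↦ by ext; simp [add_smul]) (fun _ _ _ ↦ by ext; simp [smul_smul])
    (fun _ _ _ ↦ by ext; simp) (fun c f x ↦ by ext z; exact smul_comm (f.1 z) c x.1)

@[simp]
lemma rankOneMap_tmul (f : V) (x : K) :
    rankOneMap K V (f ⊗ₜ x) = (f : H →L[𝕜] 𝕜).smulRight (x : H) := rfl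

lemma rankOneMap_tmul_mul_tmul (f : V) (x : K) (g : V) (y : K) :
    rankOneMap K V (f ⊗ₜ x) * rankOneMap K V (g ⊗ₜ y) =
      (f : H →L[𝕜] 𝕜) y • rankOneMap K V (g ⊗ₜ x) := by
  ext z
  simp [smul_smul, mul_comm]

lemma rankOneMap_injective : Function.Injective (rankOneMap K V) := by
  let j : V →ₗ[𝕜] Module.Dual 𝕜 H := ContinuousLinearMap.coeLM 𝕜 ∘ₗ V.subtype
  have hj : Function.Injective j :=
    ContinuousLinearMap.coe_injective.comp Subtype.val_injective
  have factor (t : V ⊗[𝕜] K) (z : H) :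
      rankOneMap K V t z = dualTensorHom 𝕜 H K (j.rTensor K t) z := by
    induction t with
    | zero => simp
    | tmul f x => simp [j]
    | add s t hs ht => simp [hs, ht]
  intro s t hst
  apply Module.Flat.rTensor_preserves_injective_linearMap j hj
  apply dualTensorHom_injective_of_free
  ext z
  rw [← factor, ← factor, hst]

lemma range_rankOneMap :
    LinearMap.range (rankOneMap K V) =
      Submodule.span 𝕜 {T : H →L[𝕜] H | ∃ (x : H) (f : H →L[𝕜] 𝕜),
        x ∈ K ∧ x ≠ 0 ∧ f ∈ V ∧ f ≠ 0 ∧ T = f.smulRight x} := by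
  apply le_antisymm
  · rw [LinearMap.range_eq_map, ← TensorProduct.span_tmul_eq_top, Submodule.map_span,
      Submodule.span_le]
    rintro _ ⟨_, ⟨f, x, rfl⟩, rfl⟩
    by_cases hx : (x : H) = 0
    · simp [hx]
    by_cases hf : (f : H →L[𝕜] 𝕜) = 0
    · simp [hf]
    exact Submodule.subset_span ⟨x, f, x.2, hx, f.2, hf, rfl⟩
  · rw [Submodule.span_le]
    rintro _ ⟨x, f, hx, -, hf, -, rfl⟩
    exact ⟨⟨f, hf⟩ ⊗ₜ ⟨x, hx⟩, rfl⟩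

lemma mul_mem_range_rankOneMap {S T : H →L[𝕜] H} (hS : S ∈ LinearMap.range (rankOneMap K V))
    (hT : T ∈ LinearMap.range (rankOneMap K V)) : S * T ∈ LinearMap.range (rankOneMap K V) := by
  obtain ⟨s, rfl⟩ := hS
  obtain ⟨t, rfl⟩ := hT
  induction s with
  | zero => simp
  | add s₁ s₂ h₁ h₂ => simpa only [map_add, add_mul] using add_mem h₁ h₂
  | tmul f x =>
    induction t with
    | zero => simp
    | add t₁ t₂ h₁ h₂ => simpa only [map_add, mul_add] using add_mem h₁ h₂
    | tmul g y =>
      rw [rankOneMap_tmul_mul_tmul]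
      exact Submodule.smul_mem _ _ ⟨g ⊗ₜ x, rfl⟩

/-- The algebra spanned by the rank-one operators `y ↦ f y • x` with `x ∈ K` and `f ∈ V`. It is
the algebra `F(K)` of the theorem when `V` is the annihilator of `W`. -/
noncomputable def rankOneSubalgebra : NonUnitalSubalgebra 𝕜 (H →L[𝕜] H) :=
  (LinearMap.range (rankOneMap K V)).toNonUnitalSubalgebra fun _ _ ↦ mul_mem_range_rankOneMap K V

/-- The tensor product model `V ⊗ K` of the algebra spanned by rank-one operators. -/
noncomputable def rankOneEquiv : V ⊗[𝕜] K ≃ₗ[𝕜] rankOneSubalgebra K V :=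
  LinearEquiv.ofInjective (rankOneMap K V) (rankOneMap_injective K V)

lemma rankOneEquiv_tmul_mul_tmul (f : V) (x : K) (g : V) (y : K) :
    rankOneEquiv K V (f ⊗ₜ x) * rankOneEquiv K V (g ⊗ₜ y) =
      (ContinuousLinearMap.coeLM 𝕜).domRestrict₁₂ V K f y • rankOneEquiv K V (g ⊗ₜ x) :=
  Subtype.ext (rankOneMap_tmul_mul_tmul K V f x g y)

end RankOne

theorem FK_zero_lie_product_determined_general {H : Type*} [AddCommGroup H] [Module ℂ H]
    [TopologicalSpace H] [IsTopologicalAddGroup H] [ContinuousSMul ℂ H]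
    (K : Submodule ℂ H) (V : Submodule ℂ (H →L[ℂ] ℂ)) :
    ∃ F : NonUnitalSubalgebra ℂ (H →L[ℂ] H),
      (F : Set (H →L[ℂ] H)) =
        ↑(Submodule.span ℂ {T : H →L[ℂ] H | ∃ (x : H) (f : H →L[ℂ] ℂ),
          x ∈ K ∧ x ≠ 0 ∧ f ∈ V ∧ f ≠ 0 ∧ T = f.smulRight x}) ∧
      ZeroLieProductDetermined ↥F :=
  ⟨rankOneSubalgebra K V, congrArg SetLike.coe (range_rankOneMap K V),
    ZeroLieProductDetermined.of_tensorProduct_equiv (V := V) (E := K)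
      ((ContinuousLinearMap.coeLM ℂ).domRestrict₁₂ V K)
      (rankOneEquiv K V) (rankOneEquiv_tmul_mul_tmul K V)⟩

/-- Let `H` be a complex Hilbert space and `K`, `W` closed subspaces with
`K ∩ W = {0}` and closed linear span `K ∨ W = H`.  Then `F(K)`, the linear span of
the rank-one operators `x ⊗ f : y ↦ f(y) • x` with `0 ≠ x ∈ K` and `0 ≠ f ∈ W^⊥`,
is a (non-unital) subalgebra of `B(H)` and is a zero Lie product determined
algebra. -/
theorem FK_zero_lie_product_determined (H : Type*) [NormedAddCommGroup H]
    [InnerProductSpace ℂ H] [CompleteSpace H]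
    (K W : Submodule ℂ H) (hKc : IsClosed (K : Set H)) (hWc : IsClosed (W : Set H))
    (hKW : K ⊓ W = ⊥) (hspan : (K ⊔ W).topologicalClosure = ⊤) :
    ∃ F : NonUnitalSubalgebra ℂ (H →L[ℂ] H),
      (F : Set (H →L[ℂ] H)) =
        ↑(Submodule.span ℂ {T : H →L[ℂ] H | ∃ (x : H) (f : H →L[ℂ] ℂ),
          x ∈ K ∧ x ≠ 0 ∧ (∀ w ∈ W, f w = 0) ∧ f ≠ 0 ∧ T = f.smulRight x}) ∧
      ZeroLieProductDetermined ↥F := by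
  simpa using FK_zero_lie_product_determined_general K
    (W.dualAnnihilator.comap (ContinuousLinearMap.coeLM ℂ))
end
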